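/- (Symmetry for co-NSOP_1 types) Let p(x) be a co-NSOP_1 partial type over M and let a be a tuple of realizations of p. If a ⫝^{Kd}_M b, then b ⫝^{Kd}_M a. -/

import Mathlib

namespace NSOP3Paper

open FirstOrder Language

universe u v w w' w₂ x y z

/-- Consistency (equivalently, by compactness over the monster model, finite
satisfiability) of a family of conditions on tuples. -/
def FamConsistent {ι : Type*} {X : Type*} (C : ι → X → Prop) : Prop :=
  ∀ s : Finset ι, ∃ xx : X, ∀ i ∈ s, C i xx

/-- `k`-inconsistency of a family of conditions: any `k` of them (with pairwise
distinct indices) are jointly unsatisfiable. -/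
def FamKInconsistent {ι : Type*} {X : Type*} (k : ℕ) (C : ι → X → Prop) : Prop :=
  ∀ s : Finset ι, s.card = k → ¬∃ xx : X, ∀ i ∈ s, C i xx

/-- Flattening of a family of tuples into a single tuple. -/
def flat {𝕄 : Type w} {ι : Type*} {β : Type*} (a : ι → β → 𝕄) : ι × β → 𝕄 :=
  fun q => a q.1 q.2

/-- A first-order `L`-formula in free variables `α`, together with a tuple of
parameters from `𝕄`; this represents an instance `φ(x̄, b̄)`. -/
structure ParamFormula (L : FirstOrder.Language.{u, v}) (𝕄 : Type w) [L.Structure 𝕄]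
    (α : Type w') where
  Params : Type
  toFormula : L.Formula (α ⊕ Params)
  params : Params → 𝕄

namespace ParamFormula

variable {L : FirstOrder.Language.{u, v}} {𝕄 : Type w} [L.Structure 𝕄] {α : Type w'}

/-- Realization of `φ(x̄, b̄)` at a tuple from `𝕄`. -/
def Realize (φ : ParamFormula L 𝕄 α) (xx : α → 𝕄) : Prop :=
  φ.toFormula.Realize (Sum.elim xx φ.params)

/-- All parameters of `φ` lie in `A`; i.e. `φ ∈ L(A)`. -/
def ParamsIn (φ : ParamFormula L 𝕄 α) (A : Set 𝕄) : Prop :=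
  ∀ i, φ.params i ∈ A

/-- Negation of a formula with parameters. -/
protected def not (φ : ParamFormula L 𝕄 α) : ParamFormula L 𝕄 α :=
  ⟨φ.Params, BoundedFormula.not φ.toFormula, φ.params⟩

/-- Substitute a tuple of elements of `𝕄` for the second group of free variables,
obtaining the instance `φ(x̄, c̄)` as a formula with parameters. -/
def subst {γ : Type} (φ : ParamFormula L 𝕄 (α ⊕ γ)) (c : γ → 𝕄) : ParamFormula L 𝕄 α :=
  ⟨γ ⊕ φ.Params,
    (φ.toFormula).relabel (Sum.elim (Sum.map id Sum.inl) (Sum.inr ∘ Sum.inr)),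
    Sum.elim c φ.params⟩

end ParamFormula

section TypesDefs

variable (L : FirstOrder.Language.{u, v}) (𝕄 : Type w) [L.Structure 𝕄]

/-- Two tuples have the same type over the parameter set `A` (written `b ≡_A b'`). -/
def TpEq (A : Set 𝕄) {β : Type w'} (b b' : β → 𝕄) : Prop :=
  ∀ φ : ParamFormula L 𝕄 β, φ.ParamsIn A → (φ.Realize b ↔ φ.Realize b')

/-- A complete global type in variables `α`: a complete, consistent set of formulas
with parameters from the monster model `𝕄`. -/
structure GlobalType (α : Type w') where
  Mem : ParamFormula L 𝕄 α → Prop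
  consistent : ∀ S : Finset (ParamFormula L 𝕄 α), (∀ φ ∈ S, Mem φ) →
    ∃ xx : α → 𝕄, ∀ φ ∈ S, φ.Realize xx
  complete : ∀ φ : ParamFormula L 𝕄 α, Mem φ ∨ Mem φ.not

/-- A sequence of tuples is indiscernible over the parameter set `A`: any two finite
increasing subtuples of the same length have the same type over `A`. -/
def IndiscernibleOver (A : Set 𝕄) {β : Type w'} (b : ℕ → β → 𝕄) : Prop :=
  ∀ (n : ℕ) (f g : Fin n → ℕ), StrictMono f → StrictMono g →
    TpEq L 𝕄 A (fun q : Fin n × β => b (f q.1) q.2) (fun q : Fin n × β => b (g q.1) q.2)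

end TypesDefs

namespace GlobalType

variable {L : FirstOrder.Language.{u, v}} {𝕄 : Type w} [L.Structure 𝕄] {α : Type w'}

/-- A global type is invariant over `A` if membership of `φ(x̄, b̄)` depends only on
the type of `b̄` over `A`. -/
def InvariantOver (p : GlobalType L 𝕄 α) (A : Set 𝕄) : Prop :=
  ∀ (P : Type) (ψ : L.Formula (α ⊕ P)) (b b' : P → 𝕄),
    TpEq L 𝕄 A b b' → (p.Mem ⟨P, ψ, b⟩ ↔ p.Mem ⟨P, ψ, b'⟩)

/-- A global type is finitely satisfiable in `A` if each of its formulas is satisfied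
by a tuple from `A`. -/
def FinSatIn (p : GlobalType L 𝕄 α) (A : Set 𝕄) : Prop :=
  ∀ φ : ParamFormula L 𝕄 α, p.Mem φ → ∃ xx : α → 𝕄, (∀ i, xx i ∈ A) ∧ φ.Realize xx

/-- `a ⊨ p|_B` : the tuple `a` realizes the restriction of the global type `p` to the
parameter set `B`. -/
def RealizesOver (p : GlobalType L 𝕄 α) (B : Set 𝕄) (a : α → 𝕄) : Prop :=
  ∀ φ : ParamFormula L 𝕄 α, p.Mem φ → φ.ParamsIn B → φ.Realize a

/-- `(b i)` is a Morley sequence in `p` over `A`: each `b i ⊨ p|_{A b_{<i}}`. -/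
def IsMorleyOver (p : GlobalType L 𝕄 α) (A : Set 𝕄) (b : ℕ → α → 𝕄) : Prop :=
  ∀ i : ℕ, p.RealizesOver (A ∪ ⋃ j ∈ Set.Iio i, Set.range (b j)) (b i)

end GlobalType

section MorleyDefs

variable (L : FirstOrder.Language.{u, v}) (𝕄 : Type w) [L.Structure 𝕄]

/-- `(b i)` is an invariant Morley sequence over `A`: a Morley sequence in some global
type invariant over `A`. -/
def IsInvMorleyOver (A : Set 𝕄) {α : Type w'} (b : ℕ → α → 𝕄) : Prop :=
  ∃ p : GlobalType L 𝕄 α, p.InvariantOver A ∧ p.IsMorleyOver A b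

/-- `(b i)` is a coheir Morley sequence over `A`: a Morley sequence in some global
type finitely satisfiable in `A`. -/
def IsCoheirMorleyOver (A : Set 𝕄) {α : Type w'} (b : ℕ → α → 𝕄) : Prop :=
  ∃ p : GlobalType L 𝕄 α, p.FinSatIn A ∧ p.IsMorleyOver A b

end MorleyDefs

namespace ParamFormula

variable {L : FirstOrder.Language.{u, v}} {𝕄 : Type w} [L.Structure 𝕄] {α : Type w'}

/-- `φ(x̄, b̄)` Kim-divides over `A`: some invariant Morley sequence over `A` starting
with `b̄` makes the corresponding instances inconsistent. -/
def KimDividesOver (φ : ParamFormula L 𝕄 α) (A : Set 𝕄) : Prop :=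
  ∃ b : ℕ → φ.Params → 𝕄, b 0 = φ.params ∧ IsInvMorleyOver L 𝕄 A b ∧
    ¬FamConsistent fun (i : ℕ) (xx : α → 𝕄) => φ.toFormula.Realize (Sum.elim xx (b i))

/-- `φ(x̄, b̄)` Conant-divides over `A`: every invariant Morley sequence over `A`
starting with `b̄` makes the corresponding instances inconsistent. -/
def ConantDividesOver (φ : ParamFormula L 𝕄 α) (A : Set 𝕄) : Prop :=
  ∀ b : ℕ → φ.Params → 𝕄, b 0 = φ.params → IsInvMorleyOver L 𝕄 A b →
    ¬FamConsistent fun (i : ℕ) (xx : α → 𝕄) => φ.toFormula.Realize (Sum.elim xx (b i))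

/-- `φ(x̄, b̄)` divides over `A`: some `A`-indiscernible sequence starting with `b̄`
makes the corresponding instances inconsistent. -/
def DividesOver (φ : ParamFormula L 𝕄 α) (A : Set 𝕄) : Prop :=
  ∃ b : ℕ → φ.Params → 𝕄, b 0 = φ.params ∧ IndiscernibleOver L 𝕄 A b ∧
    ¬FamConsistent fun (i : ℕ) (xx : α → 𝕄) => φ.toFormula.Realize (Sum.elim xx (b i))

/-- `φ` Kim-forks over `A`: it implies a finite disjunction of formulas Kim-dividing
over `A`. -/
def KimForksOver (φ : ParamFormula L 𝕄 α) (A : Set 𝕄) : Prop :=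
  ∃ (k : ℕ) (ψ : Fin k → ParamFormula L 𝕄 α), (∀ j, (ψ j).KimDividesOver A) ∧
    ∀ xx : α → 𝕄, φ.Realize xx → ∃ j, (ψ j).Realize xx

/-- `φ` Conant-forks over `A`: it implies a finite disjunction of formulas
Conant-dividing over `A`. -/
def ConantForksOver (φ : ParamFormula L 𝕄 α) (A : Set 𝕄) : Prop :=
  ∃ (k : ℕ) (ψ : Fin k → ParamFormula L 𝕄 α), (∀ j, (ψ j).ConantDividesOver A) ∧
    ∀ xx : α → 𝕄, φ.Realize xx → ∃ j, (ψ j).Realize xx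

/-- `φ` forks over `A`: it implies a finite disjunction of formulas dividing over `A`. -/
def ForksOver (φ : ParamFormula L 𝕄 α) (A : Set 𝕄) : Prop :=
  ∃ (k : ℕ) (ψ : Fin k → ParamFormula L 𝕄 α), (∀ j, (ψ j).DividesOver A) ∧
    ∀ xx : α → 𝕄, φ.Realize xx → ∃ j, (ψ j).Realize xx

end ParamFormula

section IndDefs

variable (L : FirstOrder.Language.{u, v}) (𝕄 : Type w) [L.Structure 𝕄]

/-- `a ⫝^K_A B` : `tp(a/A ∪ B)` contains no formula Kim-forking over `A`. -/
def IndKim (A B : Set 𝕄) {γ : Type w'} (a : γ → 𝕄) : Prop :=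
  ∀ φ : ParamFormula L 𝕄 γ, φ.ParamsIn (A ∪ B) → φ.Realize a → ¬φ.KimForksOver A

/-- `a ⫝^{Kd}_A B` : `tp(a/A ∪ B)` contains no formula Kim-dividing over `A`. -/
def IndKd (A B : Set 𝕄) {γ : Type w'} (a : γ → 𝕄) : Prop :=
  ∀ φ : ParamFormula L 𝕄 γ, φ.ParamsIn (A ∪ B) → φ.Realize a → ¬φ.KimDividesOver A

/-- `a ⫝^{K*}_A B` : Conant-independence. -/
def IndConant (A B : Set 𝕄) {γ : Type w'} (a : γ → 𝕄) : Prop :=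
  ∀ φ : ParamFormula L 𝕄 γ, φ.ParamsIn (A ∪ B) → φ.Realize a → ¬φ.ConantForksOver A

/-- `a ⫝^{K*d}_A B` : Conant-dividing independence. -/
def IndConantD (A B : Set 𝕄) {γ : Type w'} (a : γ → 𝕄) : Prop :=
  ∀ φ : ParamFormula L 𝕄 γ, φ.ParamsIn (A ∪ B) → φ.Realize a → ¬φ.ConantDividesOver A

/-- `a ⫝^f_A B` : forking-independence. -/
def IndForking (A B : Set 𝕄) {γ : Type w'} (a : γ → 𝕄) : Prop :=
  ∀ φ : ParamFormula L 𝕄 γ, φ.ParamsIn (A ∪ B) → φ.Realize a → ¬φ.ForksOver A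

/-- `a ⫝^i_A B` : `tp(a/A ∪ B)` extends to a global type invariant over `A`. -/
def IndInv (A B : Set 𝕄) {γ : Type w'} (a : γ → 𝕄) : Prop :=
  ∃ p : GlobalType L 𝕄 γ, p.InvariantOver A ∧
    ∀ φ : ParamFormula L 𝕄 γ, φ.ParamsIn (A ∪ B) → φ.Realize a → p.Mem φ

/-- `a ⫝^u_A B` : `tp(a/A ∪ B)` extends to a global type finitely satisfiable in `A`. -/
def IndFinSat (A B : Set 𝕄) {γ : Type w'} (a : γ → 𝕄) : Prop :=
  ∃ p : GlobalType L 𝕄 γ, p.FinSatIn A ∧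
    ∀ φ : ParamFormula L 𝕄 γ, φ.ParamsIn (A ∪ B) → φ.Realize a → p.Mem φ

/-- `a ⫝^{K+}_A b` : there is an invariant Morley sequence over `A` starting with `b`
that is indiscernible over `A ∪ a`. -/
def IndKPlus (A : Set 𝕄) {δ : Type w'} {γ : Type w₂} (b : δ → 𝕄) (a : γ → 𝕄) : Prop :=
  ∃ bs : ℕ → δ → 𝕄, bs 0 = b ∧ IsInvMorleyOver L 𝕄 A bs ∧
    IndiscernibleOver L 𝕄 (A ∪ Set.range a) bs

/-- `a ⫝^{K+u}_A b` : there is a coheir Morley sequence over `A` starting with `b`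
that is indiscernible over `A ∪ a`. -/
def IndKPlusU (A : Set 𝕄) {δ : Type w'} {γ : Type w₂} (b : δ → 𝕄) (a : γ → 𝕄) : Prop :=
  ∃ bs : ℕ → δ → 𝕄, bs 0 = b ∧ IsCoheirMorleyOver L 𝕄 A bs ∧
    IndiscernibleOver L 𝕄 (A ∪ Set.range a) bs

/-- Conant-independence `⫝^{K*}` is symmetric (over every small model). -/
def ConantSymmetric : Prop :=
  ∀ (M : L.ElementarySubstructure 𝕄) (γ δ : Type w) (a : γ → 𝕄) (b : δ → 𝕄),
    IndConant L 𝕄 (M : Set 𝕄) (Set.range b) a → IndConant L 𝕄 (M : Set 𝕄) (Set.range a) b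

/-- Conant-dividing independence `⫝^{K*d}` is symmetric. -/
def ConantDSymmetric : Prop :=
  ∀ (M : L.ElementarySubstructure 𝕄) (γ δ : Type w) (a : γ → 𝕄) (b : δ → 𝕄),
    IndConantD L 𝕄 (M : Set 𝕄) (Set.range b) a → IndConantD L 𝕄 (M : Set 𝕄) (Set.range a) b

/-- The relation `⫝^{K+}` is symmetric. -/
def KPlusSymmetric : Prop :=
  ∀ (M : L.ElementarySubstructure 𝕄) (γ δ : Type w) (a : γ → 𝕄) (b : δ → 𝕄),
    IndKPlus L 𝕄 (M : Set 𝕄) b a → IndKPlus L 𝕄 (M : Set 𝕄) a b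

/-- Forking-independence satisfies the chain condition with respect to invariant
Morley sequences. -/
def ChainConditionF : Prop :=
  ∀ (M : L.ElementarySubstructure 𝕄) (γ δ : Type w) (a : γ → 𝕄) (bs : ℕ → δ → 𝕄),
    IsInvMorleyOver L 𝕄 (M : Set 𝕄) bs →
    IndForking L 𝕄 (M : Set 𝕄) (Set.range (bs 0)) a →
    ∃ bs' : ℕ → δ → 𝕄,
      TpEq L 𝕄 ((M : Set 𝕄) ∪ Set.range (bs 0)) (flat bs') (flat bs) ∧
      IndiscernibleOver L 𝕄 ((M : Set 𝕄) ∪ Set.range a) bs' ∧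
      IndForking L 𝕄 (M : Set 𝕄) (Set.range (flat bs')) a

/-- Kim-independence satisfies the chain condition with respect to invariant Morley
sequences. -/
def ChainConditionK : Prop :=
  ∀ (M : L.ElementarySubstructure 𝕄) (γ δ : Type w) (a : γ → 𝕄) (bs : ℕ → δ → 𝕄),
    IsInvMorleyOver L 𝕄 (M : Set 𝕄) bs →
    IndKim L 𝕄 (M : Set 𝕄) (Set.range (bs 0)) a →
    ∃ bs' : ℕ → δ → 𝕄,
      TpEq L 𝕄 ((M : Set 𝕄) ∪ Set.range (bs 0)) (flat bs') (flat bs) ∧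
      IndiscernibleOver L 𝕄 ((M : Set 𝕄) ∪ Set.range a) bs' ∧
      IndKim L 𝕄 (M : Set 𝕄) (Set.range (flat bs')) a

/-- `T` is NSOP₃: there is no definable binary relation on tuples with no 3-cycles
containing an infinite chain. -/
def IsNSOP3 : Prop :=
  ¬∃ (m : ℕ) (R : ParamFormula L 𝕄 (Fin m ⊕ Fin m)) (a : ℕ → Fin m → 𝕄),
    (∀ i j : ℕ, i < j → R.Realize (Sum.elim (a i) (a j))) ∧
    ¬∃ x1 x2 x3 : Fin m → 𝕄,
      R.Realize (Sum.elim x1 x2) ∧ R.Realize (Sum.elim x2 x3) ∧ R.Realize (Sum.elim x3 x1)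

/-- `𝕄` is a `κ`-monster: every consistent type in fewer than `κ` variables over a
parameter set of size less than `κ` is realized. -/
class IsMonster (κ : Cardinal.{w}) : Prop where
  saturated : ∀ {α : Type w} (A : Set 𝕄) (S : Set (ParamFormula L 𝕄 α)),
    Cardinal.mk α < κ → Cardinal.mk A < κ → (∀ φ ∈ S, φ.ParamsIn A) →
    (∀ S₀ : Finset (ParamFormula L 𝕄 α), (∀ φ ∈ S₀, φ ∈ S) →
      ∃ xx : α → 𝕄, ∀ φ ∈ S₀, φ.Realize xx) →
    ∃ xx : α → 𝕄, ∀ φ ∈ S, φ.Realize xx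

/-- A tuple realizes the partial type `P`. -/
def RealizesPType {nv : ℕ} (P : Set (ParamFormula L 𝕄 (Fin nv))) (a : Fin nv → 𝕄) : Prop :=
  ∀ φ ∈ P, φ.Realize a

/-- `p(x̄)` is co-NSOP₁: no `L(M)`-formula `φ(x̄, ȳ)` and tree of tuples of
realizations of `p` witness SOP₁-style consistency/inconsistency. -/
def CoNSOP1 (M : Set 𝕄) {nv : ℕ} (P : Set (ParamFormula L 𝕄 (Fin nv))) : Prop :=
  ¬∃ (k m : ℕ) (φ : ParamFormula L 𝕄 (Fin k ⊕ (Fin m × Fin nv)))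
      (b : List Bool → Fin m → Fin nv → 𝕄),
    φ.ParamsIn M ∧
    (∀ η j, RealizesPType L 𝕄 P (b η j)) ∧
    (∀ σ : ℕ → Bool, FamConsistent fun (n : ℕ) (xx : Fin k → 𝕄) =>
      (φ.subst (flat (b (List.ofFn fun i : Fin n => σ i)))).Realize xx) ∧
    (∀ η₁ η₂ : List Bool, (η₁ ++ [false]) <+: η₂ →
      ¬∃ xx : Fin k → 𝕄, (φ.subst (flat (b η₂))).Realize xx ∧
        (φ.subst (flat (b (η₁ ++ [true])))).Realize xx)

/-- The set of realizations of the partial type `P`. -/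
def PRealizations {nv : ℕ} (P : Set (ParamFormula L 𝕄 (Fin nv))) : Type w :=
  { a : Fin nv → 𝕄 // RealizesPType L 𝕄 P a }

/-- The language `L_p` associated to a partial `nv`-type: an `m`-ary relation symbol
for each `L(M)`-formula in `m` groups of `nv` variables. -/
def pLang (M : Set 𝕄) (nv : ℕ) : Language :=
  ⟨fun _ => Empty, fun m => { φ : ParamFormula L 𝕄 (Fin m × Fin nv) // φ.ParamsIn M }⟩

/-- The structure `M_p` on the set of realizations of `p`, with relations interpreted
by the corresponding formulas in `𝕄`. -/
instance pStruct (M : Set 𝕄) {nv : ℕ} (P : Set (ParamFormula L 𝕄 (Fin nv))) :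
    (pLang L 𝕄 M nv).Structure (PRealizations L 𝕄 P) where
  funMap := fun {n} f _ => f.elim
  RelMap := fun {m} R xs => R.1.Realize fun q : Fin m × Fin nv => (xs q.1).1 q.2

end IndDefs

/-- An SOP₁ pattern witnessed inside the structure `W`. -/
def SOP1PatternIn (L' : FirstOrder.Language.{x, y}) (W : Type z) [L'.Structure W] : Prop :=
  ∃ (k n : ℕ) (φ : L'.Formula (Fin k ⊕ Fin n)) (bt : List Bool → Fin n → W),
    (∀ σ : ℕ → Bool, FamConsistent fun (i : ℕ) (xx : Fin k → W) =>
      φ.Realize (Sum.elim xx (bt (List.ofFn fun j : Fin i => σ j)))) ∧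
    (∀ η₁ η₂ : List Bool, (η₁ ++ [false]) <+: η₂ →
      ¬∃ xx : Fin k → W, φ.Realize (Sum.elim xx (bt η₂)) ∧
        φ.Realize (Sum.elim xx (bt (η₁ ++ [true]))))

/-- The complete theory of `N` is NSOP₁: no SOP₁ pattern in any elementarily
equivalent structure. -/
def IsNSOP1Th (L' : FirstOrder.Language.{x, y}) (N : Type z) [L'.Structure N] : Prop :=
  ¬∃ (W : Type (max x y z)) (S : L'.Structure W),
    L'.completeTheory N = @Language.completeTheory L' W S ∧ @SOP1PatternIn L' W S

/-- The formula `φ(x̄, ȳ)` has the tree property, witnessed in `W`. -/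
def FormulaTPIn (L' : FirstOrder.Language.{x, y}) (W : Type z) [L'.Structure W]
    {k n : ℕ} (φ : L'.Formula (Fin k ⊕ Fin n)) : Prop :=
  ∃ (kk : ℕ) (bt : List ℕ → Fin n → W),
    (∀ σ : ℕ → ℕ, FamConsistent fun (i : ℕ) (xx : Fin k → W) =>
      φ.Realize (Sum.elim xx (bt (List.ofFn fun j : Fin i => σ j)))) ∧
    (∀ η : List ℕ, FamKInconsistent kk fun (j : ℕ) (xx : Fin k → W) =>
      φ.Realize (Sum.elim xx (bt (η ++ [j]))))

/-- The formula `φ(x̄, ȳ)` has SOP₁, witnessed in `W`. -/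
def FormulaSOP1In (L' : FirstOrder.Language.{x, y}) (W : Type z) [L'.Structure W]
    {k n : ℕ} (φ : L'.Formula (Fin k ⊕ Fin n)) : Prop :=
  ∃ bt : List Bool → Fin n → W,
    (∀ σ : ℕ → Bool, FamConsistent fun (i : ℕ) (xx : Fin k → W) =>
      φ.Realize (Sum.elim xx (bt (List.ofFn fun j : Fin i => σ j)))) ∧
    (∀ η₁ η₂ : List Bool, (η₁ ++ [false]) <+: η₂ →
      ¬∃ xx : Fin k → W, φ.Realize (Sum.elim xx (bt η₂)) ∧
        φ.Realize (Sum.elim xx (bt (η₁ ++ [true]))))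

/-- Longest common prefix (meet in the tree `2^{<ω}`). -/
def meet : List Bool → List Bool → List Bool
  | a :: as, b :: bs => if a = b then a :: meet as bs else []
  | _, _ => []

/-- Strict tree order (strict prefix) on `2^{<ω}`. -/
def StrictPrefix (η ν : List Bool) : Prop := η <+: ν ∧ η ≠ ν

/-- Lexicographic order on `2^{<ω}`. -/
def LexLt (η ν : List Bool) : Prop :=
  StrictPrefix η ν ∨ ((meet η ν ++ [false]) <+: η ∧ (meet η ν ++ [true]) <+: ν)

/-- The meet `c 0 ∧ … ∧ c k`. -/
def meetInit (c : ℕ → List Bool) : ℕ → List Bool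
  | 0 => c 0
  | k + 1 => meet (meetInit c k) (c (k + 1))

/-- `c 0, …, c (l-1)` is a descending comb: a lexicographically increasing antichain
whose successive meets form a strictly descending chain in the tree order. -/
def IsDescendingComb (l : ℕ) (c : ℕ → List Bool) : Prop :=
  (∀ i j, i < l → j < l → i ≠ j → ¬(c i <+: c j)) ∧
  (∀ i j, i < j → j < l → LexLt (c i) (c j)) ∧
  (∀ k, k + 1 < l → StrictPrefix (meetInit c (k + 1)) (meetInit c k))

section DCTP

variable (L : FirstOrder.Language.{u, v}) (𝕄 : Type w) [L.Structure 𝕄]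

/-- `T` has `k`-DCTP₂. -/
def HasKDCTP2 (k : ℕ) : Prop :=
  ∃ (kx ny : ℕ) (φ : ParamFormula L 𝕄 (Fin kx ⊕ Fin ny)) (b : List Bool → Fin ny → 𝕄),
    (∀ σ : ℕ → Bool, FamKInconsistent k fun (n : ℕ) (xx : Fin kx → 𝕄) =>
      (φ.subst (b (List.ofFn fun i : Fin n => σ i))).Realize xx) ∧
    (∀ (l : ℕ) (c : ℕ → List Bool), IsDescendingComb l c →
      ∃ xx : Fin kx → 𝕄, ∀ i < l, (φ.subst (b (c i))).Realize xx)

/-- `T` is N-ω-DCTP₂: it does not have `k`-DCTP₂ for any `k`. -/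
def NOmegaDCTP2 : Prop := ∀ k : ℕ, ¬HasKDCTP2 L 𝕄 k

/-- A generic triple of sets of realizations of three partial types: the three sets
begin mutually indiscernible invariant Morley sequences over `M`. -/
def GenericTriple (M : Set 𝕄) {ι₁ ι₂ ι₃ : Type w} {nv₁ nv₂ nv₃ : ℕ}
    (A : ι₁ → Fin nv₁ → 𝕄) (B : ι₂ → Fin nv₂ → 𝕄) (C : ι₃ → Fin nv₃ → 𝕄) : Prop :=
  ∃ (IA : ℕ → ι₁ → Fin nv₁ → 𝕄) (IB : ℕ → ι₂ → Fin nv₂ → 𝕄) (IC : ℕ → ι₃ → Fin nv₃ → 𝕄),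
    IA 0 = A ∧ IB 0 = B ∧ IC 0 = C ∧
    IsInvMorleyOver L 𝕄 M (fun i => flat (IA i)) ∧
    IsInvMorleyOver L 𝕄 M (fun i => flat (IB i)) ∧
    IsInvMorleyOver L 𝕄 M (fun i => flat (IC i)) ∧
    IndiscernibleOver L 𝕄
      (M ∪ Set.range (flat fun i => flat (IB i)) ∪ Set.range (flat fun i => flat (IC i)))
      (fun i => flat (IA i)) ∧
    IndiscernibleOver L 𝕄
      (M ∪ Set.range (flat fun i => flat (IA i)) ∪ Set.range (flat fun i => flat (IC i)))
      (fun i => flat (IB i)) ∧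
    IndiscernibleOver L 𝕄
      (M ∪ Set.range (flat fun i => flat (IA i)) ∪ Set.range (flat fun i => flat (IB i)))
      (fun i => flat (IC i))

end DCTP

/-- The language of hypergraph sequences: one `n`-ary relation symbol for each `n`. -/
def hgLang : FirstOrder.Language.{0, 0} := ⟨fun _ => Empty, fun _ => PUnit⟩

section Hypergraph

variable (V : Type z) [hgLang.Structure V]

/-- The `n`-ary edge relation of a hypergraph sequence. -/
def hgRel {n : ℕ} (v : Fin n → V) : Prop :=
  @Structure.RelMap hgLang V _ n PUnit.unit v

/-- A family of vertices is a clique: every tuple of its members is an edge. -/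
def IsClique {ι : Type*} (a : ι → V) : Prop :=
  ∀ (n : ℕ) (f : Fin n → ι), hgRel V fun j => a (f j)

/-- A family of vertices is a `k`-anticlique: no `k`-tuple of its members (with
pairwise distinct indices) is an edge. -/
def IsAnticlique (k : ℕ) {ι : Type*} (a : ι → V) : Prop :=
  ∀ f : Fin k → ι, Function.Injective f → ¬hgRel V fun j => a (f j)

/-- The hypergraph sequence has MTP. -/
def HasMTP : Prop :=
  ∃ (k : ℕ) (bt : List ℕ → V),
    (∀ σ : ℕ → ℕ, IsClique V fun n : ℕ => bt (List.ofFn fun j : Fin n => σ j)) ∧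
    (∀ η : List ℕ, IsAnticlique V k fun n : ℕ => bt (η ++ [n]))

/-- The hypergraph sequence has an `(ω, ω, 1)`-array. -/
def HasOmegaArray : Prop :=
  ∃ (k : ℕ) (bt : ℕ → ℕ → V),
    (∀ i : ℕ, IsClique V (bt i)) ∧
    (∀ σ : ℕ → ℕ, IsAnticlique V k fun i : ℕ => bt i (σ i))

/-- The hypergraph sequence has MSOP₁. -/
def HasMSOP1 : Prop :=
  ∃ bt : List Bool → V,
    (∀ σ : ℕ → Bool, IsClique V fun n : ℕ => bt (List.ofFn fun j : Fin n => σ j)) ∧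
    (∀ η₁ η₂ : List Bool, (η₁ ++ [false]) <+: η₂ →
      IsAnticlique V 2 ![bt η₂, bt (η₁ ++ [true])])

/-- The hypergraph sequence has ω-MDCTP₂. -/
def HasOmegaMDCTP2 : Prop :=
  ∃ (k : ℕ) (bt : List Bool → V),
    (∀ σ : ℕ → Bool, IsAnticlique V k fun n : ℕ => bt (List.ofFn fun j : Fin n => σ j)) ∧
    (∀ (l : ℕ) (c : ℕ → List Bool), IsDescendingComb l c →
      IsClique V fun i : Fin l => bt (c i))

/-- The hypergraph sequence has the compatible order property. -/
def HasCompatibleOrderProperty : Prop :=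
  ∃ c d : ℕ → V,
    (∀ m n : ℕ, m < n →
      IsClique V fun i : Fin (n + 1) => if (i : ℕ) ≤ m then d i else c i) ∧
    (∀ m n : ℕ, m < n → ¬hgRel V ![c m, d n])

end Hypergraph

section DpLayer

variable {L : FirstOrder.Language.{u, v}} {𝕄 : Type w} [L.Structure 𝕄]

theorem param_split {C : Type x} {α : Type y} (φ : L.Formula (C ⊕ α)) :
    ∃ (j : ℕ) (ψ : L.Formula (α ⊕ Fin j)) (g : Fin j → C), Function.Injective g ∧
      ∀ (c : C → 𝕄) (v : α → 𝕄),
      φ.Realize (Sum.elim c v) ↔ ψ.Realize (Sum.elim v (c ∘ g)) := by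
  classical
  let s : Finset C := φ.freeVarFinset.preimage Sum.inl (Sum.inl_injective.injOn)
  have hs : ∀ c, Sum.inl c ∈ φ.freeVarFinset ↔ c ∈ s := fun c => by simp [s]
  let e := s.equivFin
  let f : φ.freeVarFinset → α ⊕ Fin s.card := fun q =>
    match q with
    | ⟨Sum.inl c, h⟩ => Sum.inr (e ⟨c, (hs c).1 h⟩)
    | ⟨Sum.inr a, _⟩ => Sum.inl a
  refine ⟨s.card, BoundedFormula.restrictFreeVar φ f, fun i => (e.symm i : C), ?_, ?_⟩
  · intro i j hij
    exact e.symm.injective (Subtype.ext hij)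
  · intro c v
    unfold Formula.Realize
    rw [BoundedFormula.realize_restrictFreeVar (v' := Sum.elim c v)]
    rintro ⟨(c' | a), h⟩ <;> simp [f]

/-- `P` is definable over `M`. -/
def Dp (M : L.ElementarySubstructure 𝕄) {α : Type} (P : (α → 𝕄) → Prop) : Prop :=
  ∃ φ : L.Formula (M ⊕ α), ∀ v, P v ↔ φ.Realize (Sum.elim (fun i : M => (i : 𝕄)) v)

variable {M : L.ElementarySubstructure 𝕄} {α β γ ζ : Type}

theorem Dp.congr {P Q : (α → 𝕄) → Prop} (h : Dp M P) (e : ∀ v, P v ↔ Q v) : Dp M Q := by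
  obtain ⟨φ, h⟩ := h
  exact ⟨φ, fun v => (e v).symm.trans (h v)⟩

theorem Dp.not {P : (α → 𝕄) → Prop} (h : Dp M P) : Dp M (fun v => ¬ P v) := by
  obtain ⟨φ, h⟩ := h
  exact ⟨BoundedFormula.not φ, fun v => by simp [h, Formula.Realize]⟩

theorem Dp.and {P Q : (α → 𝕄) → Prop} (h : Dp M P) (h' : Dp M Q) :
    Dp M (fun v => P v ∧ Q v) := by
  obtain ⟨φ, h⟩ := h
  obtain ⟨φ', h'⟩ := h'
  exact ⟨φ ⊓ φ', fun v => by simp [h, h']⟩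

theorem Dp.imp {P Q : (α → 𝕄) → Prop} (h : Dp M P) (h' : Dp M Q) :
    Dp M (fun v => P v → Q v) :=
  (h.and h'.not).not.congr fun v => by tauto

theorem Dp.true : Dp M (fun _ : α → 𝕄 => True) :=
  ⟨⊤, fun v => by simp⟩

theorem Dp.all {ι : Type x} (s : Finset ι) {P : ι → (α → 𝕄) → Prop} (h : ∀ i ∈ s, Dp M (P i)) :
    Dp M (fun v => ∀ i ∈ s, P i v) := by
  classical
  induction s using Finset.induction_on with
  | empty => exact Dp.true.congr (by simp)
  | insert a s _ ih =>
    exact ((h a (by simp)).and (ih fun i hi => h i (by simp [hi]))).congr (by simp)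

theorem Dp.allF {ι : Type x} [Finite ι] {P : ι → (α → 𝕄) → Prop} (h : ∀ i, Dp M (P i)) :
    Dp M (fun v => ∀ i, P i v) := by
  cases nonempty_fintype ι
  exact (Dp.all Finset.univ (fun i _ => h i)).congr (by simp)

theorem Dp.const (p : Prop) : Dp M (fun _ : α → 𝕄 => p) := by
  by_cases hp : p
  · exact Dp.true.congr (by simp [hp])
  · exact Dp.true.not.congr (by simp [hp])

theorem Dp.sub {P : (α → 𝕄) → Prop} (h : Dp M P) (f : α → M ⊕ β) :
    Dp M (fun v : β → 𝕄 => P (fun i => Sum.elim (fun i : M => (i : 𝕄)) v (f i))) := by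
  obtain ⟨φ, h⟩ := h
  refine ⟨φ.relabel (Sum.elim Sum.inl f), fun v => ?_⟩
  beta_reduce
  rw [h, Formula.realize_relabel]
  apply iff_of_eq; congr 1
  funext i; rcases i with i | i <;> simp

theorem Dp.re {P : (α → 𝕄) → Prop} (h : Dp M P) (f : α → β) :
    Dp M (fun v : β → 𝕄 => P (v ∘ f)) :=
  (h.sub (fun i => Sum.inr (f i))).congr fun v => by simp [Function.comp_def]

theorem Dp.eqc (i j : α) : Dp M (fun v : α → 𝕄 => v i = v j) :=
  ⟨(Term.var (Sum.inr i)).equal (Term.var (Sum.inr j)), fun v => by simp⟩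

theorem Dp.exF [Finite γ] {P : (α ⊕ γ → 𝕄) → Prop} (h : Dp M P) :
    Dp M (fun v => ∃ w : γ → 𝕄, P (Sum.elim v w)) := by
  obtain ⟨φ, h⟩ := h
  refine ⟨Formula.iExs γ (φ.relabel (Sum.elim (Sum.inl ∘ Sum.inl) (Sum.map Sum.inr id)) :
    L.Formula ((M ⊕ α) ⊕ γ)), fun v => ?_⟩
  rw [Formula.realize_iExs]
  refine exists_congr fun w => ?_
  rw [h, Formula.realize_relabel]
  apply iff_of_eq; congr 1
  funext i; rcases i with i | i | i <;> simp

theorem Dp.ex [Nonempty 𝕄] {P : (α ⊕ γ → 𝕄) → Prop} (h : Dp M P) :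
    Dp M (fun v => ∃ w : γ → 𝕄, P (Sum.elim v w)) := by
  obtain ⟨φ, h⟩ := h
  obtain ⟨j, ψ, g, hg, e⟩ := param_split (𝕄 := 𝕄) (C := γ) (α := M ⊕ α)
    (φ.relabel (Sum.elim (Sum.inr ∘ Sum.inl) (Sum.elim (Sum.inr ∘ Sum.inr) Sum.inl)))
  have key : ∀ v w, P (Sum.elim v w) ↔ ψ.Realize
      (Sum.elim (Sum.elim (fun i : M => (i : 𝕄)) v) (w ∘ g)) := by
    intro v w
    rw [← e, Formula.realize_relabel, h]
    apply iff_of_eq; congr 1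
    funext i; rcases i with i | i | i <;> simp
  refine ⟨Formula.iExs (Fin j) ψ, fun v => ?_⟩
  rw [Formula.realize_iExs]
  constructor
  · rintro ⟨w, hw⟩
    exact ⟨_, (key v w).1 hw⟩
  · rintro ⟨w, hw⟩
    refine ⟨Function.extend g w (fun _ => Classical.arbitrary 𝕄), (key _ _).2 ?_⟩
    rwa [Function.extend_comp hg]

theorem Dp.elem [Finite α] {P : (α → 𝕄) → Prop} (h : Dp M P) {x : α → 𝕄} (hx : P x) :
    ∃ y : α → M, P (fun i => y i) := by
  obtain ⟨φ, h⟩ := h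
  let ψ : L.Formula M := Formula.iExs α φ
  have h1 : ψ.Realize (fun i : M => (i : 𝕄)) := by
    rw [Formula.realize_iExs]; exact ⟨x, (h x).1 hx⟩
  have h2 : ψ.Realize (id : M → M) := by
    rw [← M.subtype.map_formula]; exact h1
  rw [Formula.realize_iExs] at h2
  obtain ⟨y, hy⟩ := h2
  refine ⟨y, (h _).2 ?_⟩
  rw [← M.subtype.map_formula] at hy
  convert hy using 1
  funext i; rcases i with i | i <;> simp

theorem Dp.toParam' {R : (ζ ⊕ α → 𝕄) → Prop} (h : Dp M R) {γ' : Type y} (e : α → γ') :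
    ∃ (j : ℕ) (ψ : L.Formula (γ' ⊕ Fin j)) (g : Fin j → M ⊕ ζ),
      ∀ (z : ζ → 𝕄) (x : γ' → 𝕄), ψ.Realize (Sum.elim x
        (fun i => Sum.elim (fun i : M => (i : 𝕄)) z (g i))) ↔ R (Sum.elim z (x ∘ e)) := by
  obtain ⟨φ, h⟩ := h
  obtain ⟨j, ψ, g, hg, e'⟩ := param_split (𝕄 := 𝕄) (C := M ⊕ ζ) (α := γ')
    (φ.relabel (Sum.elim (Sum.inl ∘ Sum.inl) (Sum.elim (Sum.inl ∘ Sum.inr) (Sum.inr ∘ e))))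
  refine ⟨j, ψ, g, fun z x => ?_⟩
  have := e' (Sum.elim (fun i : M => (i : 𝕄)) z) x
  rw [Formula.realize_relabel] at this
  rw [h]
  refine this.symm.trans ?_
  apply iff_of_eq; congr 1
  funext i; rcases i with i | i | i <;> simp

theorem Dp.toParam {R : (ζ ⊕ α → 𝕄) → Prop} (h : Dp M R) (z : ζ → 𝕄) {γ' : Type y} (e : α → γ') :
    ∃ θ : ParamFormula L 𝕄 γ', θ.ParamsIn ((M : Set 𝕄) ∪ Set.range z) ∧
      ∀ x : γ' → 𝕄, θ.Realize x ↔ R (Sum.elim z (x ∘ e)) := by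
  obtain ⟨j, ψ, g, hg⟩ := h.toParam' e
  refine ⟨⟨Fin j, ψ, fun i => Sum.elim (fun i : M => (i : 𝕄)) z (g i)⟩, ?_, hg z⟩
  intro i
  change Sum.elim _ _ (g i) ∈ _
  rcases g i with i | i
  · left; simp
  · right; simp

theorem Dp.ofParam (θ : ParamFormula L 𝕄 α) (z : ζ → 𝕄)
    (hθ : θ.ParamsIn ((M : Set 𝕄) ∪ Set.range z)) :
    ∃ R : (ζ ⊕ α → 𝕄) → Prop, Dp M R ∧ ∀ x : α → 𝕄, θ.Realize x ↔ R (Sum.elim z x) := by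
  have : ∀ i, ∃ s : M ⊕ ζ, θ.params i = Sum.elim (fun i : M => (i : 𝕄)) z s := by
    intro i
    rcases hθ i with h | ⟨j, hj⟩
    · exact ⟨Sum.inl ⟨_, h⟩, rfl⟩
    · exact ⟨Sum.inr j, hj.symm⟩
  choose s hs using this
  let φ : L.Formula (M ⊕ (ζ ⊕ α)) := θ.toFormula.relabel
    (Sum.elim (Sum.inr ∘ Sum.inr) (fun i => Sum.map id Sum.inl (s i)))
  refine ⟨fun v => φ.Realize (Sum.elim (fun i : M => (i : 𝕄)) v), ⟨φ, fun v => Iff.rfl⟩, ?_⟩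
  intro x
  beta_reduce
  rw [Formula.realize_relabel, ParamFormula.Realize]
  apply iff_of_eq; congr 1
  funext i; rcases i with i | i
  · simp
  · simp only [Sum.elim_inr, hs, Function.comp]
    rcases s i with j | j <;> simp

/-- Same type over `M`. -/
def TE (M : L.ElementarySubstructure 𝕄) (x x' : α → 𝕄) : Prop :=
  ∀ P : (α → 𝕄) → Prop, Dp M P → (P x ↔ P x')

theorem TE.of {x x' : α → 𝕄} (h : ∀ P : (α → 𝕄) → Prop, Dp M P → P x → P x') : TE M x x' :=
  fun _ hP => ⟨h _ hP, fun h' => by_contra fun h'' => h _ hP.not h'' h'⟩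

theorem TE.refl (x : α → 𝕄) : TE M x x := fun _ _ => Iff.rfl

theorem TE.symm {x x' : α → 𝕄} (h : TE M x x') : TE M x' x := fun P hP => (h P hP).symm

theorem TE.trans {x x' x'' : α → 𝕄} (h : TE M x x') (h' : TE M x' x'') : TE M x x'' :=
  fun P hP => (h P hP).trans (h' P hP)

theorem TE.re {x x' : α → 𝕄} (h : TE M x x') (f : β → α) : TE M (x ∘ f) (x' ∘ f) :=
  fun P hP => h _ (hP.re f)

theorem TE.sub {x x' : α → 𝕄} (h : TE M x x') (f : β → M ⊕ α) :
    TE M (fun i => Sum.elim (fun i : M => (i : 𝕄)) x (f i))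
      (fun i => Sum.elim (fun i : M => (i : 𝕄)) x' (f i)) :=
  fun _ hP => h _ (hP.sub f)

theorem TE.tpEq {x x' : α → 𝕄} (h : TE M x x') : TpEq L 𝕄 (M : Set 𝕄) x x' := by
  intro θ hθ
  obtain ⟨R, hR, e⟩ := Dp.ofParam (M := M) (ζ := Empty) θ Empty.elim (fun i => Or.inl (hθ i))
  rw [e, e]
  have := h _ (hR.re (Sum.elim (Empty.elim : Empty → α) id))
  convert this using 2 <;> (funext i; rcases i with i | i; exact i.elim; rfl)

theorem TE.ofTpEq {x x' : α → 𝕄} (h : TpEq L 𝕄 (M : Set 𝕄) x x') : TE M x x' := by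
  intro P hP
  obtain ⟨θ, hθ, e⟩ := Dp.toParam (hP.re (Sum.inr : α → Empty ⊕ α)) Empty.elim (id : α → α)
  have := h θ (fun i => by
    rcases hθ i with h | ⟨j, _⟩
    · exact h
    · exact j.elim)
  rw [e, e] at this
  exact this

end DpLayer



theorem fipUltra {X : Type x} (p : Set X → Prop) (h0 : p Set.univ)
    (hi : ∀ s t, p s → p t → p (s ∩ t)) (hne : ∀ s, p s → s.Nonempty) :
    ∃ F : Ultrafilter X, ∀ s, p s → s ∈ F := by
  let G : Filter X :=
    { sets := {t | ∃ s, p s ∧ s ⊆ t}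
      univ_sets := ⟨_, h0, subset_rfl⟩
      sets_of_superset := by
        rintro s t ⟨s', h, h'⟩ hst
        exact ⟨s', h, h'.trans hst⟩
      inter_sets := by
        rintro s t ⟨s', h, h'⟩ ⟨t', k, k'⟩
        exact ⟨_, hi _ _ h k, Set.inter_subset_inter h' k'⟩ }
  have hG : G.NeBot := by
    refine ⟨fun hb => ?_⟩
    have : (∅ : Set X) ∈ G := by rw [hb]; trivial
    obtain ⟨s, hs, hs'⟩ := this
    obtain ⟨x, hx⟩ := hne s hs
    exact hs' hx
  refine ⟨Ultrafilter.of G, fun s hs => Ultrafilter.of_le G ⟨s, hs, subset_rfl⟩⟩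

section GnLayer

variable {L : FirstOrder.Language.{u, v}} {𝕄 : Type w} [L.Structure 𝕄]
variable (M : L.ElementarySubstructure 𝕄) {α β γ ζ : Type}

/-- `x` satisfies every formula over `M, z` that is eventually true along `F`. -/
def Gn (F : Filter (α → 𝕄)) (z : ζ → 𝕄) (x : α → 𝕄) : Prop :=
  ∀ R : (ζ ⊕ α → 𝕄) → Prop, Dp M R → (∀ᶠ x' in F, R (Sum.elim z x')) → R (Sum.elim z x)

/-- Saturation in filter form. -/
def LimP : Prop :=
  ∀ (α ζ : Type) [Countable α] [Countable ζ] (F : Filter (α → 𝕄)) [F.NeBot] (z : ζ → 𝕄),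
    ∃ x, Gn M F z x

theorem limP (κ : Cardinal.{w}) [IsMonster L 𝕄 κ]
    (hM : Cardinal.mk ↥(M : Set 𝕄) < κ) (hinf : Cardinal.aleph0 ≤ Cardinal.mk ↥(M : Set 𝕄)) :
    LimP M := by
  intro α ζ _ _ F _ z
  have hA : Cardinal.mk (ULift.{w} α) < κ :=
    lt_of_le_of_lt (Cardinal.mk_le_aleph0.trans hinf) hM
  have hB : Cardinal.mk ↥((M : Set 𝕄) ∪ Set.range z) < κ := by
    refine lt_of_le_of_lt (Cardinal.mk_union_le _ _) (lt_of_le_of_lt ?_ hM)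
    refine Cardinal.add_le_of_le hinf le_rfl (le_trans ?_ hinf)
    exact Cardinal.mk_le_aleph0_iff.2 (Set.countable_range z).to_subtype
  obtain ⟨xx, hx⟩ := IsMonster.saturated (L := L) (κ := κ) ((M : Set 𝕄) ∪ Set.range z)
    {θ : ParamFormula L 𝕄 (ULift.{w} α) | θ.ParamsIn ((M : Set 𝕄) ∪ Set.range z) ∧
      ∀ᶠ x' in F, θ.Realize (x' ∘ ULift.down)} hA hB (fun φ h => h.1) (by
      intro S₀ hS
      have : ∀ᶠ x' in F, ∀ φ ∈ S₀, φ.Realize (x' ∘ ULift.down) :=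
        (Filter.eventually_all_finset S₀).2 fun φ hφ => (hS φ hφ).2
      obtain ⟨x', hx'⟩ := this.exists
      exact ⟨_, hx'⟩)
  refine ⟨xx ∘ ULift.up, fun R hR hev => ?_⟩
  obtain ⟨θ, hθ, e⟩ := hR.toParam z (ULift.up.{w} : α → _)
  rw [← e]
  refine hx θ ⟨hθ, hev.mono fun x' h => ?_⟩
  rw [e]; exact h

variable {M}

theorem TE.ext (hL : LimP M) [Nonempty 𝕄] [Countable ζ] [Countable α] {x x' : ζ → 𝕄}
    (h : TE M x x') (w : α → 𝕄) : ∃ w', TE M (Sum.elim x w) (Sum.elim x' w') := by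
  obtain ⟨F, hF⟩ := fipUltra
    (fun s : Set (α → 𝕄) => ∃ R : (ζ ⊕ α → 𝕄) → Prop, Dp M R ∧ R (Sum.elim x w) ∧
      s = {w' | R (Sum.elim x' w')})
    ⟨_, Dp.true, trivial, by simp⟩
    (by
      rintro s t ⟨R, h, h', rfl⟩ ⟨R', k, k', rfl⟩
      exact ⟨_, h.and k, ⟨h', k'⟩, rfl⟩)
    (by
      rintro s ⟨R, h1, h2, rfl⟩
      exact (h _ h1.ex).1 ⟨w, h2⟩)
  obtain ⟨w', hw⟩ := hL α ζ F x'
  exact ⟨w', TE.of fun R hR hx => hw R hR (hF _ ⟨R, hR, hx, rfl⟩)⟩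

variable (M) in
/-- The type along `U` is invariant over `M`. -/
def Inv (U : Filter (α → 𝕄)) : Prop :=
  ∀ (ζ : Type) (z z' : ζ → 𝕄), TE M z z' → ∀ R : (ζ ⊕ α → 𝕄) → Prop, Dp M R →
    (∀ᶠ x in U, R (Sum.elim z x)) → ∀ᶠ x in U, R (Sum.elim z' x)

theorem Gn.te {U : Ultrafilter (α → 𝕄)} (hU : Inv M (U : Filter (α → 𝕄))) {z z' : ζ → 𝕄} {x x' : α → 𝕄}
    (hz : TE M z z') (h : Gn M (U : Filter (α → 𝕄)) z x) (h' : Gn M (U : Filter (α → 𝕄)) z' x') :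
    TE M (Sum.elim z x) (Sum.elim z' x') := by
  refine TE.of fun R hR hx => by_contra fun hn => ?_
  have h1 : ¬ ∀ᶠ x in U, R (Sum.elim z' x) := fun h1 => hn (h' R hR h1)
  have h2 := Ultrafilter.eventually_not.2 h1
  exact h _ hR.not (hU _ _ _ hz.symm _ hR.not h2) hx

theorem Gn.re {F : Filter (α → 𝕄)} {z : ζ → 𝕄} {x : α → 𝕄} (h : Gn M F z x) (g : β → α) :
    Gn M (F.map (· ∘ g)) z (x ∘ g) := by
  intro R hR he
  have := h _ (hR.re (Sum.map id g)) (by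
    refine (Filter.eventually_map.1 he).mono fun x' hx => ?_
    convert hx using 1
    funext i; rcases i with i | i <;> rfl)
  convert this using 1
  funext i; rcases i with i | i <;> rfl

theorem Gn.rez {F : Filter (α → 𝕄)} {z : ζ → 𝕄} {x : α → 𝕄} (h : Gn M F z x) (g : γ → M ⊕ ζ) :
    Gn M F (fun i => Sum.elim (fun i : M => (i : 𝕄)) z (g i)) x := by
  intro R hR he
  have hR' := hR.sub (β := ζ ⊕ α) (Sum.elim (fun i => Sum.map id Sum.inl (g i))
    (fun i => Sum.inr (Sum.inr i)))
  have key : ∀ x' : α → 𝕄, (fun i => Sum.elim (fun i : M => (i : 𝕄)) (Sum.elim z x')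
      (Sum.elim (fun i => Sum.map id Sum.inl (g i)) (fun i => Sum.inr (Sum.inr i)) i)) =
      Sum.elim (fun i => Sum.elim (fun i : M => (i : 𝕄)) z (g i)) x' := by
    intro x'; funext i; rcases i with i | i
    · simp only [Sum.elim_inl]; rcases g i with j | j <;> simp
    · simp
  have := h _ hR' (by simpa only [key] using he)
  simpa only [key] using this

theorem Inv.re {F : Filter (α → 𝕄)} (h : Inv M F) (g : β → α) : Inv M (F.map (· ∘ g)) := by
  intro ζ z z' hz R hR he
  have key : ∀ (z : ζ → 𝕄) (x : α → 𝕄), Sum.elim z x ∘ Sum.map id g = Sum.elim z (x ∘ g) := by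
    intro z x; funext i; rcases i with i | i <;> rfl
  have := h _ z z' hz _ (hR.re (Sum.map id g))
  simp only [key] at this
  exact Filter.eventually_map.2 (this (Filter.eventually_map.1 he))

variable (M) in
/-- Inclusion of tuples from `M`. -/
def up (y : α → M) : α → 𝕄 := fun i => y i

theorem Dp.up {R : (ζ ⊕ α → 𝕄) → Prop} (h : Dp M R) (y : α → M) :
    Dp M (fun z => R (Sum.elim z (up M y))) := by
  refine (h.sub (β := ζ) (Sum.elim Sum.inr (fun i => Sum.inl (y i)))).congr fun z => ?_
  apply iff_of_eq; congr 1
  funext i; rcases i with i | i <;> rfl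

theorem inv_up (D : Filter (α → M)) : Inv M (D.map (up M)) := by
  intro ζ z z' hz R hR he
  refine Filter.eventually_map.2 ((Filter.eventually_map.1 he).mono fun y hy => ?_)
  exact (hz _ (hR.up y)).1 hy

/-- Flattening of a list of tuples. -/
def fl (d : 𝕄) (l : List (β → 𝕄)) : ℕ × β → 𝕄 := fun q => l.getD q.1 (fun _ => d) q.2

/-- Index map for `fl` of a cons. -/
def consIdx : ℕ × β → (ℕ × β) ⊕ β
  | (0, i) => Sum.inr i
  | (n+1, i) => Sum.inl (n, i)

theorem fl_cons (d : 𝕄) (x : β → 𝕄) (l : List (β → 𝕄)) :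
    fl d (x :: l) = Sum.elim (fl d l) x ∘ consIdx := by
  funext ⟨n, i⟩
  cases n <;> simp [fl, consIdx]

variable (M) in
/-- Generic lists: head is generic over the tail. -/
def GnL (d : 𝕄) : List (Ultrafilter (β → 𝕄)) → List (β → 𝕄) → Prop
  | [], [] => True
  | U :: Us, x :: l => Gn M (U : Filter (β → 𝕄)) (fl d l) x ∧ GnL d Us l
  | _, _ => False

theorem GnL.te (d : 𝕄) : ∀ (Us : List (Ultrafilter (β → 𝕄))) (l l' : List (β → 𝕄)),
    (∀ U ∈ Us, Inv M (U : Filter (β → 𝕄))) → GnL M d Us l → GnL M d Us l' → TE M (fl d l) (fl d l')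
  | [], [], [], _, _, _ => TE.refl _
  | U :: Us, x :: l, x' :: l', hU, h, h' => by
    have ih := GnL.te d Us l l' (fun V hV => hU V (by simp [hV])) h.2 h'.2
    rw [fl_cons, fl_cons]
    exact (Gn.te (hU U (by simp)) ih h.1 h'.1).re _

theorem GnL.exists (hL : LimP M) [Countable β] (d : 𝕄) :
    ∀ (Us : List (Ultrafilter (β → 𝕄))), ∃ l, GnL M d Us l
  | [] => ⟨[], trivial⟩
  | U :: Us => by
    obtain ⟨l, hl⟩ := GnL.exists hL d Us
    obtain ⟨x, hx⟩ := hL β (ℕ × β) U (fl d l)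
    exact ⟨x :: l, hx, hl⟩

theorem GnL.length (d : 𝕄) : ∀ (Us : List (Ultrafilter (β → 𝕄))) (l : List (β → 𝕄)),
    GnL M d Us l → l.length = Us.length
  | [], [], _ => rfl
  | _ :: Us, _ :: l, h => by simp [GnL.length d Us l h.2]

end GnLayer

section Tens

variable {X : Type x} {Y : Type y}

/-- Iterated tensor product; the head is most generic. -/
noncomputable def tensL : List (Ultrafilter X) → Ultrafilter (List X)
  | [] => pure []
  | D :: Ds => D.bind fun x => (tensL Ds).map (x :: ·)

theorem ev_tensL_nil {P : List X → Prop} : (∀ᶠ l in (tensL ([] : List (Ultrafilter X)) : Filter (List X)), P l) ↔ P [] :=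
  Iff.rfl

theorem ev_tensL_cons {D : Ultrafilter X} {Ds : List (Ultrafilter X)} {P : List X → Prop} :
    (∀ᶠ l in (tensL (D :: Ds) : Filter (List X)), P l) ↔
      ∀ᶠ x in (D : Filter X), ∀ᶠ l in (tensL Ds : Filter (List X)), P (x :: l) :=
  Iff.rfl

end Tens

section GT

variable {L : FirstOrder.Language.{u, v}} {𝕄 : Type w} [L.Structure 𝕄]
variable {M : L.ElementarySubstructure 𝕄} {β : Type}

theorem Dp.flcons {R : (ℕ × β → 𝕄) → Prop} (h : Dp M R) (y : β → M) :
    Dp M (fun z => R (Sum.elim z (NSOP3Paper.up M y) ∘ consIdx)) :=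
  (h.re consIdx).up y

theorem GnL.tens_aux (d : 𝕄) : ∀ (Ds : List (Ultrafilter (β → M))) (l : List (β → 𝕄)),
    GnL M d (Ds.map (·.map (up M))) l → ∀ R : (ℕ × β → 𝕄) → Prop, Dp M R →
    (∀ᶠ m in (tensL Ds : Filter (List (β → M))), R (fl d (m.map (up M)))) → R (fl d l)
  | [], [], _, R, _, h => h
  | D :: Ds, x :: l, hg, R, hR, h => by
    rw [ev_tensL_cons] at h
    rw [fl_cons]
    refine hg.1 _ (hR.re consIdx) ?_
    refine Filter.eventually_map.2 (h.mono fun y hy => ?_)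
    simp only [List.map_cons, fl_cons] at hy
    exact GnL.tens_aux d Ds l hg.2 _ (hR.flcons y) hy

theorem GnL.tens {d : 𝕄} {Ds : List (Ultrafilter (β → M))} {l : List (β → 𝕄)}
    (h : GnL M d (Ds.map (·.map (up M))) l) {R : (ℕ × β → 𝕄) → Prop} (hR : Dp M R) :
    R (fl d l) ↔ ∀ᶠ m in (tensL Ds : Filter (List (β → M))), R (fl d (m.map (up M))) := by
  refine ⟨fun h1 => by_contra fun h2 => ?_, GnL.tens_aux d Ds l h R hR⟩
  exact GnL.tens_aux d Ds l h _ hR.not (Ultrafilter.eventually_not.2 h2) h1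

/-- A relation about lists of fixed length is definable. -/
theorem Dp.ofList {d : 𝕄} (N : ℕ) {Q : List (β → 𝕄) → Prop}
    (hQ : Dp M (fun v : Fin N × β → 𝕄 => Q (List.ofFn fun i j => v (i, j)))) :
    ∃ R : (ℕ × β → 𝕄) → Prop, Dp M R ∧ ∀ l : List (β → 𝕄), l.length = N → (R (fl d l) ↔ Q l) := by
  refine ⟨_, hQ.re (fun q : Fin N × β => ((q.1 : ℕ), q.2)), ?_⟩
  rintro l rfl
  apply iff_of_eq; congr 1
  apply List.ext_getElem <;> simp [fl]

end GT

section QLayer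

variable {L : FirstOrder.Language.{u, v}} {𝕄 : Type w} [L.Structure 𝕄]
variable {M : L.ElementarySubstructure 𝕄} {α β ζ : Type}

theorem GlobalType.ultra (q : GlobalType L 𝕄 α) :
    ∃ U : Ultrafilter (α → 𝕄), ∀ θ, q.Mem θ ↔ ∀ᶠ x in (U : Filter (α → 𝕄)), θ.Realize x := by
  classical
  obtain ⟨U, hU⟩ := fipUltra
    (fun s : Set (α → 𝕄) => ∃ S : Finset (ParamFormula L 𝕄 α), (∀ θ ∈ S, q.Mem θ) ∧
      s = {x | ∀ θ ∈ S, θ.Realize x}) ⟨∅, by simp⟩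
    (by
      rintro s t ⟨S, h, rfl⟩ ⟨T, k, rfl⟩
      refine ⟨S ∪ T, ?_, ?_⟩
      · intro θ hθ
        rcases Finset.mem_union.1 hθ with h1 | h1
        exacts [h _ h1, k _ h1]
      · ext x; simp only [Set.mem_inter_iff, Set.mem_ofPred_eq, Finset.mem_union]
        constructor
        · rintro ⟨h1, h2⟩ θ (h3 | h3)
          exacts [h1 _ h3, h2 _ h3]
        · intro h1
          exact ⟨fun θ h => h1 θ (Or.inl h), fun θ h => h1 θ (Or.inr h)⟩)
    (by
      rintro s ⟨S, h, rfl⟩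
      exact q.consistent S h)
  have key : ∀ θ, q.Mem θ → ∀ᶠ x in (U : Filter (α → 𝕄)), θ.Realize x := fun θ hθ =>
    (show {x | θ.Realize x} ∈ U from hU _ ⟨{θ}, by simpa using hθ, by simp⟩)
  refine ⟨U, fun θ => ⟨key θ, fun h => ?_⟩⟩
  rcases q.complete θ with h1 | h1
  · exact h1
  · have := key _ h1
    obtain ⟨x, hx, hx'⟩ := (h.and this).exists
    exact absurd hx (by simpa [ParamFormula.Realize, ParamFormula.not, Formula.Realize] using hx')

theorem GlobalType.ultra_inv (q : GlobalType L 𝕄 α) (hq : q.InvariantOver (M : Set 𝕄))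
    (U : Ultrafilter (α → 𝕄))
    (hU : ∀ θ, q.Mem θ ↔ ∀ᶠ x in (U : Filter (α → 𝕄)), θ.Realize x) : Inv M (U : Filter (α → 𝕄)) := by
  intro ζ z z' hz R hR he
  obtain ⟨j, ψ, g, hg⟩ := hR.toParam' (id : α → α)
  have := (hq (Fin j) ψ _ _ (hz.sub g).tpEq)
  rw [hU, hU] at this
  refine (this.1 (he.mono fun x hx => (hg z x).2 hx)).mono fun x hx => (hg z' x).1 hx

theorem GlobalType.ultra_gn (q : GlobalType L 𝕄 α)
    (U : Ultrafilter (α → 𝕄))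
    (hU : ∀ θ, q.Mem θ ↔ ∀ᶠ x in (U : Filter (α → 𝕄)), θ.Realize x) {B : Set 𝕄} {x : α → 𝕄}
    (hx : q.RealizesOver B x) (z : ζ → 𝕄) (hB : (M : Set 𝕄) ∪ Set.range z ⊆ B) :
    Gn M (U : Filter (α → 𝕄)) z x := by
  intro R hR he
  obtain ⟨θ, hθ, e⟩ := hR.toParam z (id : α → α)
  refine (e x).1 (hx θ ((hU θ).2 (he.mono fun x hx => (e x).2 hx)) fun i => hB (hθ i))

/-- Reversed initial segments of a sequence, reindexed. -/
def mor (bb : ℕ → α → 𝕄) (g : β → α) : ℕ → List (β → 𝕄)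
  | 0 => []
  | i + 1 => (bb i ∘ g) :: mor bb g i

theorem mor_mem (bb : ℕ → α → 𝕄) (g : β → α) : ∀ K x, x ∈ mor bb g K ↔ ∃ i < K, x = bb i ∘ g
  | 0, x => by simp [mor]
  | K + 1, x => by
    simp only [mor, List.mem_cons, mor_mem bb g K, Nat.lt_succ_iff_lt_or_eq]
    grind

theorem mor_gnL (q : GlobalType L 𝕄 α)
    (U : Ultrafilter (α → 𝕄))
    (hU : ∀ θ, q.Mem θ ↔ ∀ᶠ x in (U : Filter (α → 𝕄)), θ.Realize x) (bb : ℕ → α → 𝕄)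
    (hb : q.IsMorleyOver (M : Set 𝕄) bb) (g : β → α) (d : 𝕄) (hd : d ∈ M) :
    ∀ K, GnL M d (List.replicate K (U.map (· ∘ g))) (mor bb g K)
  | 0 => trivial
  | K + 1 => by
    refine ⟨?_, mor_gnL q U hU bb hb g d hd K⟩
    refine Gn.re (q.ultra_gn U hU (hb K) _ ?_) g
    refine Set.union_subset (Set.subset_union_left) ?_
    rintro _ ⟨⟨n, i⟩, rfl⟩
    by_cases hn : n < (mor bb g K).length
    · have : (mor bb g K)[n] ∈ mor bb g K := List.getElem_mem hn
      obtain ⟨j, hj, e⟩ := (mor_mem bb g K _).1 this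
      right
      simp only [fl, List.getD_eq_getElem _ _ hn, e]
      simp only [Set.mem_iUnion]
      exact ⟨j, hj, g i, rfl⟩
    · left
      simp only [fl]
      rw [List.getD_eq_default _ _ (not_lt.1 hn)]
      exact hd

end QLayer



section S5

variable {L : FirstOrder.Language.{u, v}} {𝕄 : Type w} [L.Structure 𝕄]
variable {M : L.ElementarySubstructure 𝕄} {n k : ℕ}

/-- Some `y` satisfies all instances selected by `p`. -/
def EX (Φ : (Fin k → 𝕄) → (Fin n → 𝕄) → Prop) (c : ℕ → Bool → Fin n → 𝕄)
    (p : ℕ → Bool → Prop) : Prop := ∃ y, ∀ i ε, p i ε → Φ y (c i ε)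

theorem EX.mono {Φ : (Fin k → 𝕄) → (Fin n → 𝕄) → Prop} {c : ℕ → Bool → Fin n → 𝕄}
    {p p' : ℕ → Bool → Prop} (h : EX Φ c p) (hp : ∀ i ε, p' i ε → p i ε) : EX Φ c p' := by
  obtain ⟨y, hy⟩ := h
  exact ⟨y, fun i ε h => hy i ε (hp i ε h)⟩

/-- History of an array. -/
def hist (c : ℕ → Bool → Fin n → 𝕄) (i : ℕ) : Fin i × Bool × Fin n → 𝕄 :=
  fun q => c q.1 q.2.1 q.2.2

/-- Flattened array. -/
def FA (c : ℕ → Bool → Fin n → 𝕄) : ℕ × Bool × Fin n → 𝕄 := fun q => c q.1 q.2.1 q.2.2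

/-- Unflattened array. -/
def uFA (v : ℕ × Bool × Fin n → 𝕄) : ℕ → Bool → Fin n → 𝕄 := fun i ε p => v (i, ε, p)

variable (M) in
/-- Array condition up to `N`. -/
def Arr (a0 : Fin n → 𝕄) (N : ℕ) (c : ℕ → Bool → Fin n → 𝕄) : Prop :=
  (∀ i < N, ∀ ε, TE M (c i ε) a0) ∧
  ∀ i < N, TE M (Sum.elim (hist c i) (c i false)) (Sum.elim (hist c i) (c i true))

/-- Definable relation `Φ`. -/
abbrev DpΦ (M : L.ElementarySubstructure 𝕄) (Φ : (Fin k → 𝕄) → (Fin n → 𝕄) → Prop) : Prop :=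
  Dp M (fun v : Fin k ⊕ Fin n → 𝕄 => Φ (v ∘ Sum.inl) (v ∘ Sum.inr))

theorem dp_exAll {Φ : (Fin k → 𝕄) → (Fin n → 𝕄) → Prop} (hΦ : DpΦ M Φ) {β : Type} {ι : Type x}
    (s : Finset ι) (f : ι → Fin n → β) :
    Dp M (fun v : β → 𝕄 => ∃ y, ∀ i ∈ s, Φ y (v ∘ f i)) := by
  have : Dp M (fun v : β ⊕ Fin k → 𝕄 => ∀ i ∈ s, Φ (v ∘ Sum.inr) (v ∘ Sum.inl ∘ f i)) :=
    Dp.all s fun i _ => hΦ.re (Sum.elim Sum.inr (Sum.inl ∘ f i))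
  exact this.exF

theorem dpEX {Φ : (Fin k → 𝕄) → (Fin n → 𝕄) → Prop} (hΦ : DpΦ M Φ) (p : ℕ → Bool → Prop) (N : ℕ)
    (hp : ∀ i ε, p i ε → i < N) : Dp M (fun v => EX Φ (uFA v) p) := by
  classical
  refine (dp_exAll hΦ ((Finset.range N ×ˢ Finset.univ).filter fun q : ℕ × Bool => p q.1 q.2)
    (fun q j => (q.1, q.2, j))).congr fun v => ?_
  refine exists_congr fun y => ⟨fun h i ε hp' => ?_, fun h i hi => ?_⟩
  · exact h (i, ε) (by simp [hp', hp i ε hp'])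
  · exact h i.1 i.2 (by simp at hi; exact hi.2)

theorem EX.te {Φ : (Fin k → 𝕄) → (Fin n → 𝕄) → Prop} (hΦ : DpΦ M Φ) {p : ℕ → Bool → Prop} (N : ℕ)
    (hp : ∀ i ε, p i ε → i < N) {c c' : ℕ → Bool → Fin n → 𝕄} (h : TE M (FA c) (FA c')) :
    EX Φ c p ↔ EX Φ c' p := h _ (dpEX hΦ p N hp)

theorem Arr.subseq {a0 : Fin n → 𝕄} {N N' : ℕ} {c : ℕ → Bool → Fin n → 𝕄} (h : Arr M a0 N c)
    (g : ℕ → ℕ) (hg : StrictMono g) (hN : ∀ i < N', g i < N) : Arr M a0 N' (fun i => c (g i)) := by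
  refine ⟨fun i hi ε => h.1 _ (hN i hi) ε, fun i hi => ?_⟩
  have := (h.2 (g i) (hN i hi)).re (Sum.map (fun q : Fin i × Bool × Fin n =>
    ((⟨g q.1, hg q.1.2⟩ : Fin (g i)), q.2)) id)
  convert this using 1 <;> (funext q; rcases q with q | q <;> rfl)

/-- Path condition. -/
def p3 (l N : ℕ) : ℕ → Bool → Prop := fun i ε =>
  (i < l ∧ ε = true) ∨ (l ≤ i ∧ i < l + N ∧ ε = false)

/-- Inconsistency condition. -/
def p4 (l f s N : ℕ) : ℕ → Bool → Prop := fun i ε =>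
  (i < l ∧ ε = true) ∨ (i = f ∧ ε = true) ∨ (s ≤ i ∧ i < s + N ∧ ε = false)

/-- Intermediate statement: arrays with `l` true entries. -/
def FF (M : L.ElementarySubstructure 𝕄) (a0 : Fin n → 𝕄)
    (Φ : (Fin k → 𝕄) → (Fin n → 𝕄) → Prop) (K l N : ℕ) : Prop :=
  ∃ c, Arr M a0 (l + N) c ∧ (∀ s : Finset ℕ, (∀ i ∈ s, i < l + N) → s.card = K →
    ¬ EX Φ c (fun i ε => i ∈ s ∧ ε = true)) ∧ EX Φ c (p3 l N)

theorem s5_first (hL : LimP M) {a0 : Fin n → 𝕄}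
    {Φ : (Fin k → 𝕄) → (Fin n → 𝕄) → Prop} (hΦ : DpΦ M Φ) (K : ℕ)
    (hF : ∀ N, FF M a0 Φ K 0 N) :
    ∃ l N0 c, (∀ N, Arr M a0 N c) ∧ (∀ N, EX Φ c (p3 l N)) ∧
      ∀ f s, l ≤ f → f < s → ¬ EX Φ c (p4 l f s N0) := by
  classical
  have hK : ¬ ∀ N, FF M a0 Φ K K N := by
    intro h
    obtain ⟨c, -, h2, h3⟩ := h 0
    refine h2 (Finset.range K) (by simp) (by simp) (h3.mono fun i ε h => ?_)
    simp only [Finset.mem_range] at h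
    exact Or.inl h
  have hex : ∃ l, ¬ ∀ N, FF M a0 Φ K l N := ⟨K, hK⟩
  obtain ⟨l, hl⟩ : ∃ l, Nat.find hex = l + 1 := by
    cases h : Nat.find hex with
    | zero => exact absurd hF (h ▸ Nat.find_spec hex)
    | succ l => exact ⟨l, rfl⟩
  have hl1 : ∀ N, FF M a0 Φ K l N := by
    have := Nat.find_min hex (m := l) (by omega)
    exact not_not.1 this
  have hl2 := Nat.find_spec hex
  rw [hl] at hl2
  obtain ⟨N0, hN0⟩ := not_forall.1 hl2
  choose c hc1 hc2 hc3 using hl1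
  -- inconsistency for each `c N`
  have hinc : ∀ N f s, l ≤ f → f < s → s + N0 ≤ l + N → ¬ EX Φ (c N) (p4 l f s N0) := by
    intro N f s hf hs hN hE
    let g : ℕ → ℕ := fun i => if i < l then i else if i = l then f else s + (i - l - 1)
    have hg : StrictMono g := by
      refine strictMono_nat_of_lt_succ fun i => ?_
      simp only [g]; split_ifs <;> omega
    have hgb : ∀ i < l + 1 + N0, g i < l + N := by
      intro i hi
      simp only [g]; split_ifs <;> omega
    refine hN0 ⟨fun i => c N (g i), (hc1 N).subseq g hg hgb, ?_, ?_⟩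
    · rintro t ht1 ht2 ⟨y, hy⟩
      refine hc2 N (t.image g) ?_ ?_ ⟨y, ?_⟩
      · intro i hi
        obtain ⟨j, hj, rfl⟩ := Finset.mem_image.1 hi
        exact hgb j (ht1 j hj)
      · rw [Finset.card_image_of_injective _ hg.injective, ht2]
      · rintro i ε ⟨hi, rfl⟩
        obtain ⟨j, hj, rfl⟩ := Finset.mem_image.1 hi
        exact hy j _ ⟨hj, rfl⟩
    · obtain ⟨y, hy⟩ := hE
      refine ⟨y, fun i ε hi => hy _ _ ?_⟩
      simp only [p3, p4, g] at hi ⊢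
      rcases hi with ⟨h, rfl⟩ | ⟨h, h', rfl⟩
      · split_ifs <;> simp <;> omega
      · rw [if_neg (by omega), if_neg (by omega)]; simp; omega
  obtain ⟨v, hv⟩ := hL (ℕ × Bool × Fin n) Empty (Filter.map (fun N => FA (c N)) Filter.atTop)
    Empty.elim
  have key : ∀ P : (ℕ × Bool × Fin n → 𝕄) → Prop, Dp M P → ∀ N1,
      (∀ N, N1 ≤ N → P (FA (c N))) → P v := by
    intro P hP N1 h
    have := hv _ (hP.re (Sum.inr : _ → Empty ⊕ (ℕ × Bool × Fin n))) (by
      rw [Filter.eventually_map]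
      exact Filter.eventually_atTop.2 ⟨N1, fun N hN => by simpa using h N hN⟩)
    simpa using this
  refine ⟨l, N0, uFA v, fun N => ⟨fun i _ ε => ?_, fun i _ => ?_⟩, fun N => ?_, ?_⟩
  · refine TE.symm (TE.of fun P hP ha => ?_)
    refine key _ (hP.re (fun p : Fin n => (i, ε, p))) (i + 1) fun N hN => ?_
    exact ((hc1 N).1 i (by omega) ε P hP).2 ha
  · refine TE.of fun P hP => ?_
    have h1 := hP.re (β := ℕ × Bool × Fin n) (Sum.elim (fun q : Fin i × Bool × Fin n =>
      ((q.1 : ℕ), q.2)) (fun p => (i, false, p)))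
    have h2 := hP.re (β := ℕ × Bool × Fin n) (Sum.elim (fun q : Fin i × Bool × Fin n =>
      ((q.1 : ℕ), q.2)) (fun p => (i, true, p)))
    have e : ∀ (v : ℕ × Bool × Fin n → 𝕄) ε, v ∘ (Sum.elim (fun q : Fin i × Bool × Fin n =>
      ((q.1 : ℕ), q.2)) (fun p => (i, ε, p))) = Sum.elim (hist (uFA v) i) (uFA v i ε) := by
      intro v ε; funext q; rcases q with q | q <;> rfl
    have := key _ (h1.imp h2) (i + 1) fun N hN => by
      rw [e, e]
      exact ((hc1 N).2 i (by omega) P hP).1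
    rw [e, e] at this
    exact this
  · refine key _ (dpEX hΦ (p3 l N) (l + N) ?_) N fun N' hN' => (hc3 N').mono ?_
    · rintro i ε (h | h) <;> omega
    · rintro i ε (h | h)
      · exact Or.inl h
      · exact Or.inr ⟨h.1, by omega, h.2.2⟩
  · intro f s hf hs
    refine key _ (dpEX hΦ (p4 l f s N0) (s + N0) ?_).not (s + N0) fun N hN => ?_
    · rintro i ε (h | h | h) <;> omega
    · exact hinc N f s hf hs (by omega)

theorem arr_step (hL : LimP M) [Nonempty 𝕄] {a0 : Fin n → 𝕄} {c : ℕ → Bool → Fin n → 𝕄}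
    (hc : ∀ N, Arr M a0 N c) (A : ℕ → Bool → Fin n → 𝕄) (hA : TE M (FA A) (FA c)) (f : ℕ) :
    ∃ A', TE M (FA A') (FA c) ∧ (∀ j < f, A' j = A j) ∧ A' f false = A f true := by
  have e : ∀ (v : ℕ × Bool × Fin n → 𝕄) ε, v ∘ (Sum.elim (fun q : Fin f × Bool × Fin n =>
      ((q.1 : ℕ), q.2)) (fun p => (f, ε, p))) = Sum.elim (hist (uFA v) f) (uFA v f ε) := by
    intro v ε; funext q; rcases q with q | q <;> rfl
  have h1 := hA.re (Sum.elim (fun q : Fin f × Bool × Fin n =>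
      ((q.1 : ℕ), q.2)) (fun p => (f, true, p)))
  rw [e, e] at h1
  have h2 := ((hc (f + 1)).2 f (by omega)).trans h1.symm
  obtain ⟨w', hw⟩ := h2.ext hL (FA c)
  have heq : ∀ i j, (Sum.elim (Sum.elim (hist c f) (c f false)) (FA c)) i =
      (Sum.elim (Sum.elim (hist c f) (c f false)) (FA c)) j →
      (Sum.elim (Sum.elim (hist A f) (A f true)) w') i =
      (Sum.elim (Sum.elim (hist A f) (A f true)) w') j := fun i j h =>
    (hw _ (Dp.eqc i j)).1 h
  refine ⟨uFA w', (hw.re Sum.inr).symm, fun j hj => ?_, ?_⟩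
  · funext ε p
    exact heq (Sum.inr (j, ε, p)) (Sum.inl (Sum.inl (⟨j, hj⟩, ε, p))) rfl
  · funext p
    exact heq (Sum.inr (f, false, p)) (Sum.inl (Sum.inr p)) rfl

/-- An SOP₁ tree of tuples each of type `tp(a0/M)`. -/
def SopTree (M : L.ElementarySubstructure 𝕄) (a0 : Fin n → 𝕄)
    (Φ : (Fin k → 𝕄) → (Fin n → 𝕄) → Prop) : Prop :=
  ∃ (q : ℕ) (T : List Bool → Fin q → Fin n → 𝕄), (∀ η j, TE M (T η j) a0) ∧
    (∀ η, ∃ y, ∀ η', η' <+: η → ∀ j, Φ y (T η' j)) ∧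
    ∀ η₁ η₂, (η₁ ++ [false]) <+: η₂ →
      ¬ ∃ y, (∀ j, Φ y (T η₂ j)) ∧ ∀ j, Φ y (T (η₁ ++ [true]) j)

theorem s5 (hL : LimP M) [Nonempty 𝕄] {a0 : Fin n → 𝕄}
    {Φ : (Fin k → 𝕄) → (Fin n → 𝕄) → Prop} (hΦ : DpΦ M Φ) (K : ℕ)
    (hF : ∀ N, FF M a0 Φ K 0 N) : SopTree M a0 Φ := by
  obtain ⟨l, N0, c, hc, h3, h4⟩ := s5_first hL hΦ K hF
  choose step hs1 hs2 hs3 using arr_step hL hc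
  let B := N0 + 1
  let pos : ℕ → ℕ := fun i => l + B * i
  let R : List Bool → {A : ℕ → Bool → Fin n → 𝕄 // TE M (FA A) (FA c)} := fun t =>
    List.rec (motive := fun _ => {A : ℕ → Bool → Fin n → 𝕄 // TE M (FA A) (FA c)})
      ⟨c, TE.refl _⟩ (fun b t r => bif b then
        ⟨step r.1 r.2 (pos (t.length + 1)), hs1 r.1 r.2 _⟩ else r) t
  let AR : List Bool → ℕ → Bool → Fin n → 𝕄 := fun t => (R t).1
  have AR_te : ∀ t, TE M (FA (AR t)) (FA c) := fun t => (R t).2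
  have AR_false : ∀ t, AR (false :: t) = AR t := fun t => rfl
  have AR_true : ∀ t, AR (true :: t) (pos (t.length + 1)) false = AR t (pos (t.length + 1)) true :=
    fun t => hs3 (R t).1 (R t).2 _
  have AR_agree : ∀ b t j, j < pos (t.length + 1) → AR (b :: t) j = AR t j := by
    intro b t j hj
    cases b
    · rfl
    · exact hs2 (R t).1 (R t).2 _ j hj
  have pos_mono : ∀ i j, i ≤ j → pos i ≤ pos j := fun i j h => by
    simp only [pos]; gcongr
  have pos_succ : ∀ i, pos (i + 1) = pos i + B := fun i => by simp only [pos]; ring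
  have AR_agree' : ∀ s t j, j < pos (t.length + 1) → AR (s ++ t) j = AR t j := by
    intro s t j hj
    induction s with
    | nil => rfl
    | cons b s ih =>
      rw [List.cons_append, AR_agree, ih]
      refine hj.trans_le (pos_mono _ _ ?_)
      simp
  let T : List Bool → Fin (l + B) → Fin n → 𝕄 := fun η j =>
    if (j : ℕ) < l then AR η.reverse j true else AR η.reverse (pos η.length + (j - l)) false
  have T_def : ∀ η j, T η j = if (j : ℕ) < l then AR η.reverse j true else
    AR η.reverse (pos η.length + (j - l)) false := fun η j => rfl
  have lpos : ∀ i, l ≤ pos i := fun i => by simp [pos]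
  have T_agree : ∀ η' η, η' <+: η → ∀ j, T η' j = if (j : ℕ) < l then AR η.reverse j true else
    AR η.reverse (pos η'.length + (j - l)) false := by
    rintro η' _ ⟨s, rfl⟩ j
    rw [T_def, List.reverse_append]
    have := j.2
    split_ifs with h
    · rw [AR_agree' _ _ _ (lt_of_lt_of_le h (lpos _))]
    · rw [AR_agree']
      rw [pos_succ, List.length_reverse]; omega
  refine ⟨l + B, T, ?_, ?_, ?_⟩
  · intro η j
    have key : ∀ i ε, TE M (AR η.reverse i ε) a0 := fun i ε =>
      ((AR_te η.reverse).re (fun p : Fin n => (i, ε, p))).trans ((hc (i + 1)).1 i (by omega) ε)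
    rw [T_def]; split_ifs <;> exact key _ _
  · intro η
    have := (EX.te hΦ (p := p3 l (B * (η.length + 1))) (l + B * (η.length + 1)) (by
      rintro i ε (h | h) <;> omega) (AR_te η.reverse)).2 (h3 _)
    obtain ⟨y, hy⟩ := this
    refine ⟨y, fun η' hη j => ?_⟩
    rw [T_agree η' η hη]
    have hj := j.2
    split_ifs with h
    · exact hy _ _ (Or.inl ⟨h, rfl⟩)
    · refine hy _ _ (Or.inr ⟨?_, ?_, rfl⟩)
      · have := lpos η'.length; omega
      · have h1 := pos_mono _ _ (Nat.succ_le_succ hη.length_le)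
        have h2 := pos_succ η'.length
        have h3 : pos (η.length + 1) = l + B * (η.length + 1) := rfl
        simp only [Nat.succ_eq_add_one] at h1
        omega
  · rintro η₁ _ ⟨s, rfl⟩ ⟨y, hy1, hy2⟩
    set η₂ := η₁ ++ [false] ++ s with hη₂
    set f := pos (η₁.length + 1) with hf
    have hlen : η₂.length = η₁.length + 1 + s.length := by simp [hη₂]; omega
    have hfp : f ≤ pos η₂.length := pos_mono _ _ (by omega)
    refine h4 f (pos η₂.length + 1) (lpos _) (by omega) ?_
    refine (EX.te hΦ (pos η₂.length + 1 + N0) ?_ (AR_te η₂.reverse)).1 ⟨y, ?_⟩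
    · have := lpos η₂.length
      rintro i ε (h | h | h) <;> omega
    · have hB : B = N0 + 1 := rfl
      rintro i ε (⟨h, rfl⟩ | ⟨rfl, rfl⟩ | ⟨h, h', rfl⟩)
      · have := hy1 ⟨i, by omega⟩
        rw [T_def] at this
        simpa [h] using this
      · have := hy2 ⟨l, by omega⟩
        rw [T_def] at this
        simp only [lt_irrefl, if_false, List.reverse_append, List.reverse_cons, List.reverse_nil,
          List.nil_append, List.length_append, List.length_singleton, Nat.sub_self,
          add_zero, List.cons_append] at this
        have h5 := AR_true η₁.reverse
        rw [List.length_reverse] at h5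
        rw [h5] at this
        have h6 : AR η₂.reverse f = AR η₁.reverse f := by
          have := AR_agree' s.reverse (false :: η₁.reverse) f (by
            rw [hf]; simp only [List.length_cons, List.length_reverse, pos_succ]; omega)
          rw [← AR_false η₁.reverse, ← this]
          congr 1
          simp [hη₂]
        rw [h6]; exact this
      · have := hy1 ⟨l + (i - pos η₂.length), by omega⟩
        rw [T_def] at this
        simp only [if_neg (show ¬ l + (i - pos η₂.length) < l by omega)] at this
        rwa [show pos η₂.length + (l + (i - pos η₂.length) - l) = i by omega] at this

end S5



theorem ev_tensL_length {X : Type x} : ∀ Ds : List (Ultrafilter X),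
    ∀ᶠ l in (tensL Ds : Filter (List X)), l.length = Ds.length
  | [] => ev_tensL_nil.2 rfl
  | D :: Ds => ev_tensL_cons.2 (Filter.Eventually.of_forall fun x =>
      (ev_tensL_length Ds).mono fun l hl => by simp [hl])

section S4

variable {L : FirstOrder.Language.{u, v}} {𝕄 : Type w} [L.Structure 𝕄]
variable {M : L.ElementarySubstructure 𝕄} {n k : ℕ}

theorem dp_exList {Φ : (Fin k → 𝕄) → (Fin n → 𝕄) → Prop} (hΦ : DpΦ M Φ) (d : 𝕄) (N : ℕ) :
    ∃ R : (ℕ × Fin n → 𝕄) → Prop, Dp M R ∧ ∀ l : List (Fin n → 𝕄), l.length = N →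
      (R (fl d l) ↔ ∃ y, ∀ x ∈ l, Φ y x) := by
  refine Dp.ofList N ((dp_exAll hΦ Finset.univ (fun (i : Fin N) (j : Fin n) => (i, j))).congr ?_)
  intro v
  simp only [List.mem_ofFn]
  refine exists_congr fun y => ⟨?_, ?_⟩
  · rintro h x ⟨i, rfl⟩
    exact h i (by simp)
  · intro h i _
    exact h _ ⟨i, rfl⟩

theorem gnL_inc {Φ : (Fin k → 𝕄) → (Fin n → 𝕄) → Prop} (hΦ : DpΦ M Φ) {d : 𝕄}
    {Us : List (Ultrafilter (Fin n → 𝕄))} (hU : ∀ U ∈ Us, Inv M (U : Filter (Fin n → 𝕄)))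
    {l l' : List (Fin n → 𝕄)} (h : GnL M d Us l) (h' : GnL M d Us l') :
    (∃ y, ∀ x ∈ l, Φ y x) ↔ ∃ y, ∀ x ∈ l', Φ y x := by
  obtain ⟨R, hR, e⟩ := dp_exList hΦ d Us.length
  rw [← e l h.length, ← e l' h'.length]
  exact GnL.te d Us l l' hU h h' R hR

theorem gnL_cons {Φ : (Fin k → 𝕄) → (Fin n → 𝕄) → Prop} (hΦ : DpΦ M Φ) {d : 𝕄}
    {Ds : List (Ultrafilter (Fin n → M))}
    {l : List (Fin n → 𝕄)} (h : GnL M d (Ds.map (·.map (up M))) l) :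
    (∃ y, ∀ x ∈ l, Φ y x) ↔ ∀ᶠ m in (tensL Ds : Filter (List (Fin n → M))),
      ∃ y, ∀ x ∈ m, Φ y (up M x) := by
  obtain ⟨R, hR, e⟩ := dp_exList hΦ d Ds.length
  rw [← e l (by simpa using h.length), h.tens hR]
  refine Filter.eventually_congr ((ev_tensL_length Ds).mono fun m hm => ?_)
  rw [e _ (by simpa using hm)]
  simp

/-- Prepend a pair to an array. -/
def consA (x0 x1 : Fin n → 𝕄) (c : ℕ → Bool → Fin n → 𝕄) : ℕ → Bool → Fin n → 𝕄
  | 0, false => x0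
  | 0, true => x1
  | i + 1, ε => c i ε

theorem exists_fl_idx (d : 𝕄) (hd : d ∈ M) (c : ℕ → Bool → Fin n → 𝕄) (l : List (Fin n → 𝕄))
    (h : ∀ x ∈ l, ∃ i ε, x = c i ε) :
    ∃ g : ℕ × Fin n → M ⊕ (ℕ × Bool × Fin n), fl d l =
      fun q => Sum.elim (fun i : M => (i : 𝕄)) (FA c) (g q) := by
  have : ∀ q : ℕ × Fin n, ∃ s : M ⊕ (ℕ × Bool × Fin n),
      fl d l q = Sum.elim (fun i : M => (i : 𝕄)) (FA c) s := by
    rintro ⟨j, p⟩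
    by_cases hj : j < l.length
    · obtain ⟨i, ε, e⟩ := h l[j] (List.getElem_mem hj)
      refine ⟨Sum.inr (i, ε, p), ?_⟩
      simp [fl, List.getElem?_eq_getElem hj, e, FA]
    · refine ⟨Sum.inl ⟨d, hd⟩, ?_⟩
      simp only [fl]
      rw [List.getD_eq_default _ _ (not_lt.1 hj)]; rfl
  choose g hg using this
  exact ⟨g, funext hg⟩

theorem Gn.tp {ζ : Type} {F : Filter (Fin n → 𝕄)} {z : ζ → 𝕄} {x a0 : Fin n → 𝕄} (h : Gn M F z x)
    (hF : ∀ P : (Fin n → 𝕄) → Prop, Dp M P → P a0 → ∀ᶠ x in F, P x) : TE M x a0 := by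
  refine TE.symm (TE.of fun P hP ha => ?_)
  have := h _ (hP.re Sum.inr) ((hF P hP ha).mono fun x hx => by simpa using hx)
  simpa using this

theorem s4_array (hL : LimP M) {a0 : Fin n → 𝕄} (d : 𝕄) (hd : d ∈ M)
    (U : Ultrafilter (Fin n → 𝕄)) (hU : Inv M (U : Filter (Fin n → 𝕄)))
    (hUa : ∀ P : (Fin n → 𝕄) → Prop, Dp M P → P a0 → ∀ᶠ x in (U : Filter (Fin n → 𝕄)), P x) :
    ∀ Ds : List (Ultrafilter (Fin n → M)),
    (∀ D ∈ Ds, ∀ P : (Fin n → 𝕄) → Prop, Dp M P → P a0 →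
      ∀ᶠ x in (D : Filter (Fin n → M)), P (up M x)) →
    ∃ c, Arr M a0 Ds.length c ∧
      GnL M d (Ds.map (·.map (up M))) ((List.range Ds.length).map (c · false)) ∧
      ∀ l, l.Sublist ((List.range Ds.length).map (c · true)) →
        GnL M d (List.replicate l.length U) l
  | [], _ => ⟨fun _ _ _ => d, ⟨by simp, by simp⟩, trivial, fun l hl => by
      simp at hl; subst hl; trivial⟩
  | D :: Ds, hD => by
    obtain ⟨c, hc1, hc2, hc3⟩ := s4_array hL d hd U hU hUa Ds (fun D' h => hD D' (by simp [h]))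
    obtain ⟨x0, hx0⟩ := hL (Fin n) (ℕ × Bool × Fin n) (D.map (up M) : Ultrafilter _) (FA c)
    obtain ⟨x1, hx1⟩ := hL (Fin n) ((ℕ × Bool × Fin n) ⊕ Fin n) U (Sum.elim (FA c) x0)
    have hx1' : Gn M (U : Filter (Fin n → 𝕄)) (FA c) x1 := by
      have := hx1.rez (fun i : ℕ × Bool × Fin n => Sum.inr (Sum.inl i))
      simpa using this
    have te0 : TE M x0 a0 := hx0.tp fun P hP ha => hD D (by simp) P hP ha
    have te1 : TE M x1 a0 := hx1'.tp hUa
    have hrow : ∀ ε, (List.range (D :: Ds).length).map ((consA x0 x1 c) · ε) =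
        (bif ε then x1 else x0) :: (List.range Ds.length).map (c · ε) := by
      intro ε
      rw [List.length_cons, List.range_succ_eq_map, List.map_cons, List.map_map]
      cases ε <;> rfl
    refine ⟨consA x0 x1 c, ⟨?_, ?_⟩, ?_, ?_⟩
    · rintro (_ | i) hi ε
      · cases ε
        exacts [te0, te1]
      · exact hc1.1 i (by simpa using hi) ε
    · rintro (_ | i) hi
      · have := (te0.trans te1.symm).re (Sum.elim (fun q : Fin 0 × Bool × Fin n => q.1.elim0) id)
        convert this using 1 <;> (funext q; rcases q with q | q; exact q.1.elim0; rfl)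
      · have h1 := hc1.2 i (by simpa using hi)
        have gz : ∀ ε, Sum.elim (hist c i) (c i ε) =
          FA c ∘ (Sum.elim (fun q : Fin i × Bool × Fin n => ((q.1 : ℕ), q.2)) (fun p => (i, ε, p))) := by
          intro ε; funext q; rcases q with q | q <;> rfl
        have g0 : ∀ ε, Gn M ((D.map (up M) : Ultrafilter _) : Filter (Fin n → 𝕄))
            (Sum.elim (hist c i) (c i ε)) x0 := by
          intro ε
          rw [gz]
          exact hx0.rez (fun q => Sum.inr ((Sum.elim (fun q : Fin i × Bool × Fin n =>
            ((q.1 : ℕ), q.2)) (fun p => (i, ε, p))) q))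
        have g1 : ∀ ε, Gn M (U : Filter (Fin n → 𝕄))
            (Sum.elim (Sum.elim (hist c i) (c i ε)) x0) x1 := by
          intro ε
          have := hx1.rez (fun q => Sum.inr (Sum.map (Sum.elim (fun q : Fin i × Bool × Fin n =>
            ((q.1 : ℕ), q.2)) (fun p => (i, ε, p))) id q))
          convert this using 1
          funext q; rcases q with (q | q) | q <;> rfl
        have h2 := Gn.te (inv_up (M := M) (D : Filter (Fin n → M))) h1 (g0 false) (g0 true)
        have h3 := Gn.te hU h2 (g1 false) (g1 true)
        let idx : (Fin (i+1) × Bool × Fin n) ⊕ Fin n →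
            (((Fin i × Bool × Fin n) ⊕ Fin n) ⊕ Fin n) ⊕ Fin n := fun q =>
          match q with
          | Sum.inl (⟨0, _⟩, false, p) => Sum.inl (Sum.inr p)
          | Sum.inl (⟨0, _⟩, true, p) => Sum.inr p
          | Sum.inl (⟨j+1, hj⟩, ε, p) => Sum.inl (Sum.inl (Sum.inl (⟨j, by omega⟩, ε, p)))
          | Sum.inr p => Sum.inl (Sum.inl (Sum.inr p))
        have h4 := h3.re idx
        have e : ∀ ε, Sum.elim (hist (consA x0 x1 c) (i+1)) (consA x0 x1 c (i+1) ε) =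
            (Sum.elim (Sum.elim (Sum.elim (hist c i) (c i ε)) x0) x1) ∘ idx := by
          intro ε
          funext q
          rcases q with ⟨⟨_ | j, hj⟩, _ | _, p⟩ | q <;> rfl
        rw [e, e]; exact h4
    · rw [hrow]
      refine ⟨?_, hc2⟩
      obtain ⟨g, hg⟩ := exists_fl_idx d hd c ((List.range Ds.length).map (c · false)) (by
        intro x hx
        obtain ⟨i, _, rfl⟩ := List.mem_map.1 hx
        exact ⟨i, false, rfl⟩)
      rw [hg]
      exact hx0.rez g
    · intro l hl
      rw [hrow] at hl
      cases hl with
      | cons _ h => exact hc3 l h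
      | @cons_cons l' _ _ h =>
        refine ⟨?_, hc3 _ h⟩
        obtain ⟨g, hg⟩ := exists_fl_idx d hd c l' (by
          intro x hx
          obtain ⟨i, _, rfl⟩ := List.mem_map.1 (h.subset hx)
          exact ⟨i, true, rfl⟩)
        rw [hg]
        exact hx1'.rez g

theorem filter_range_length (N : ℕ) (s : Finset ℕ) (hs : ∀ i ∈ s, i < N) :
    ((List.range N).filter (· ∈ s)).length = s.card := by
  rw [← List.toFinset_card_of_nodup (List.nodup_range.filter _)]
  congr 1
  ext i; simp
  exact hs i

theorem s4 (hL : LimP M) [Nonempty 𝕄] {a0 : Fin n → 𝕄} (d : 𝕄) (hd : d ∈ M)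
    {Φ : (Fin k → 𝕄) → (Fin n → 𝕄) → Prop} (hΦ : DpΦ M Φ)
    (hns : ¬ SopTree M a0 Φ)
    (U : Ultrafilter (Fin n → 𝕄)) (hU : Inv M (U : Filter (Fin n → 𝕄)))
    (hUa : ∀ P : (Fin n → 𝕄) → Prop, Dp M P → P a0 → ∀ᶠ x in (U : Filter (Fin n → 𝕄)), P x)
    (K : ℕ) (hK : ∀ l, GnL M d (List.replicate K U) l → ¬ ∃ y, ∀ x ∈ l, Φ y x) :
    ∃ K', ∀ Ds : List (Ultrafilter (Fin n → M)), Ds.length = K' →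
      (∀ D ∈ Ds, ∀ P : (Fin n → 𝕄) → Prop, Dp M P → P a0 →
        ∀ᶠ x in (D : Filter (Fin n → M)), P (up M x)) →
      ∀ᶠ m in (tensL Ds : Filter (List (Fin n → M))), ¬ ∃ y, ∀ x ∈ m, Φ y (up M x) := by
  by_contra hcon
  push Not at hcon
  refine hns (s5 hL hΦ K fun N => ?_)
  obtain ⟨Ds, rfl, hD, hE⟩ := hcon N
  obtain ⟨c, hc1, hc2, hc3⟩ := s4_array hL d hd U hU hUa Ds hD
  refine ⟨c, by simpa using hc1, ?_, ?_⟩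
  · rintro s hs hsK ⟨y, hy⟩
    have hs' : ∀ i ∈ s, i < Ds.length := by simpa using hs
    let l := ((List.range Ds.length).filter (· ∈ s)).map (c · true)
    have hl : l.Sublist ((List.range Ds.length).map (c · true)) :=
      List.filter_sublist.map _
    have hlen : l.length = K := by
      simp only [l, List.length_map]
      rw [filter_range_length _ _ hs', hsK]
    refine hK l (hlen ▸ hc3 l hl) ⟨y, ?_⟩
    intro x hx
    obtain ⟨i, hi, rfl⟩ := List.mem_map.1 hx
    exact hy i true ⟨by simpa using (List.mem_filter.1 hi).2, rfl⟩
  · obtain ⟨y, hy⟩ := (gnL_cons hΦ hc2).2 hE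
    refine ⟨y, fun i ε hi => ?_⟩
    rcases hi with h | ⟨_, h, rfl⟩
    · omega
    · exact hy _ (List.mem_map.2 ⟨i, by simpa using h, rfl⟩)

end S4


section Comb

variable {X : Type x} {Y : Type y}

open Filter

theorem ev_tensL_append : ∀ (Ds Ds' : List (Ultrafilter X)) {P : List X → Prop},
    (∀ᶠ l in (tensL (Ds ++ Ds') : Filter (List X)), P l) ↔
      ∀ᶠ l in (tensL Ds : Filter (List X)), ∀ᶠ l' in (tensL Ds' : Filter (List X)), P (l ++ l')
  | [], Ds', P => Iff.rfl
  | D :: Ds, Ds', P => by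
    rw [List.cons_append, ev_tensL_cons, ev_tensL_cons]
    refine eventually_congr (Eventually.of_forall fun x => ?_)
    exact ev_tensL_append Ds Ds'

theorem tendsto_flatMap {E : Ultrafilter X} {Ds : List (Ultrafilter Y)} {f : X → List Y}
    (h : Tendsto f E (tensL Ds)) : ∀ r, Tendsto (fun l : List X => l.flatMap f)
      (tensL (List.replicate r E)) (tensL (List.replicate r Ds).flatten)
  | 0 => fun s hs => hs
  | r + 1 => by
    intro s hs
    have hs' : ∀ᶠ l in (tensL (Ds ++ (List.replicate r Ds).flatten) : Filter (List Y)), l ∈ s := hs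
    rw [ev_tensL_append] at hs'
    have := h.eventually hs'
    change ∀ᶠ l in (tensL (E :: List.replicate r E) : Filter (List X)), l.flatMap f ∈ s
    rw [ev_tensL_cons]
    refine this.mono fun x hx => ?_
    refine ((tendsto_flatMap h r).eventually hx).mono fun l hl => ?_
    simpa using hl

theorem ev_tensL_forall {E : Ultrafilter X} {P : X → Prop} (h : ∀ᶠ x in (E : Filter X), P x) :
    ∀ r, ∀ᶠ l in (tensL (List.replicate r E) : Filter (List X)), ∀ x ∈ l, P x
  | 0 => ev_tensL_nil.2 (by simp)
  | r + 1 => by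
    rw [List.replicate_succ, ev_tensL_cons]
    exact h.mono fun x hx => (ev_tensL_forall h r).mono fun l hl => by simpa using ⟨hx, hl⟩

theorem ev_tensL_pairwise {E : Ultrafilter X} {P : X → X → Prop}
    (h : ∀ᶠ x in (E : Filter X), ∀ᶠ y in (E : Filter X), P x y) :
    ∀ r, ∀ᶠ l in (tensL (List.replicate r E) : Filter (List X)), l.Pairwise P
  | 0 => ev_tensL_nil.2 (by simp)
  | r + 1 => by
    rw [List.replicate_succ, ev_tensL_cons]
    exact h.mono fun x hx => ((ev_tensL_pairwise h r).and (ev_tensL_forall hx r)).mono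
      fun l hl => List.pairwise_cons.2 ⟨hl.2, hl.1⟩

theorem ev_tensL_sublist (K : ℕ) (I : List X → Prop) : ∀ (Ds : List (Ultrafilter X)),
    (∀ Ds', Ds'.Sublist Ds → Ds'.length = K → ∀ᶠ l in (tensL Ds' : Filter (List X)), I l) →
    ∀ᶠ l in (tensL Ds : Filter (List X)), ∀ l', l'.Sublist l → l'.length = K → I l' := by
  intro Ds
  induction Ds generalizing K I with
  | nil =>
    intro h
    refine ev_tensL_nil.2 fun l' hl hK => ?_
    rw [List.sublist_nil] at hl
    subst hl
    exact ev_tensL_nil.1 (h [] (List.Sublist.refl _) hK)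
  | cons D Ds ih =>
    intro h
    rw [ev_tensL_cons]
    have h1 := ih K I fun Ds' hs hK => h Ds' (hs.cons _) hK
    cases K with
    | zero =>
      refine Eventually.of_forall fun x => h1.mono fun l hl l' _ hl'' => ?_
      have : l' = [] := List.eq_nil_of_length_eq_zero hl''
      subst this
      exact hl [] (by simp) rfl
    | succ K =>
      -- sublists through the head
      have h2 : ∀ Ds', Ds'.Sublist Ds → Ds'.length = K →
          ∀ᶠ x in (D : Filter X), ∀ᶠ l in (tensL Ds' : Filter (List X)), I (x :: l) :=
        fun Ds' hs hK => ev_tensL_cons.1 (h (D :: Ds') (hs.cons_cons _) (by simp [hK]))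
      have h3 : ∀ᶠ x in (D : Filter X), ∀ Ds' ∈ {Ds' : List (Ultrafilter X) | Ds'.Sublist Ds},
          Ds'.length = K → ∀ᶠ l in (tensL Ds' : Filter (List X)), I (x :: l) := by
        have hfin : {Ds' : List (Ultrafilter X) | Ds'.Sublist Ds}.Finite := by
          refine (List.finite_toSet Ds.sublists).subset fun Ds' hs => ?_
          exact List.mem_sublists.2 hs
        refine (eventually_all_finite hfin).2 fun Ds' hs => ?_
        by_cases hK : Ds'.length = K
        · exact (h2 Ds' hs hK).mono fun x hx _ => hx
        · exact Eventually.of_forall fun x h => absurd h hK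
      refine h3.mono fun x hx => ?_
      refine (h1.and (ih K (fun l => I (x :: l)) fun Ds' hs hK => hx Ds' hs hK)).mono ?_
      rintro l ⟨hl1, hl2⟩ l' hs hK
      cases hs with
      | cons _ h => exact hl1 l' h hK
      | cons_cons _ h => exact hl2 _ h (by simpa using hK)

variable (A B : Type x)

/-- Trees of height `N`. -/
def TT : ℕ → Type x
  | 0 => A × B
  | N + 1 => A × List (TT N)

variable {A B}

/-- Root label. -/
def root : ∀ N, TT A B N → A
  | 0, w => Prod.fst w
  | _ + 1, w => Prod.fst w

/-- Leaves. -/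
def leaves : ∀ N, TT A B N → List B
  | 0, w => [Prod.snd w]
  | N + 1, w => (Prod.snd w).flatMap (leaves N)

/-- Good trees. -/
def TOK (φ : B → A → Prop) (S : A → Prop) (r : ℕ) : ∀ N, TT A B N → Prop
  | 0, w => S (root 0 w) ∧ ∀ b ∈ leaves 0 w, φ b (root 0 w)
  | N + 1, w => (S (root (N + 1) w) ∧ ∀ b ∈ leaves (N + 1) w, φ b (root (N + 1) w)) ∧
      (Prod.snd w).length = r ∧ ∀ t ∈ Prod.snd w, TOK φ S r N t

theorem TOK.root {φ : B → A → Prop} {S : A → Prop} {r : ℕ} :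
    ∀ {N} {w : TT A B N}, TOK φ S r N w → S (root N w) ∧ ∀ b ∈ leaves N w, φ b (NSOP3Paper.root N w)
  | 0, _, h => h
  | _ + 1, _, h => h.1

/-- Arrays read off from a tree. -/
def IsArr : ∀ N, TT A B N → List (A × A) → B → Prop
  | 0, w, [], b => b = Prod.snd w
  | N + 1, w, p :: t, b => ∃ x y, [x, y].Sublist (Prod.snd w) ∧ p = (root N y, root N x) ∧ IsArr N y t b
  | _, _, _, _ => False

/-- The relation between consecutive ultrafilters. -/
def ERel (φ : B → A → Prop) (𝒮 : Filter A) (r N : ℕ) (E : Ultrafilter (TT A B N))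
    (E' : Ultrafilter (TT A B (N + 1))) : Prop :=
  Tendsto (fun w : TT A B (N + 1) => Prod.snd w) E' (tensL (List.replicate r E)) ∧
  ∀ᶠ w in (E' : Filter (TT A B (N + 1))), ∀ b ∈ leaves (N + 1) w, φ b (root (N + 1) w)

/-- Invariant for the recursion. -/
def EGood (𝒮 : Filter A) (D : Ultrafilter B) (N : ℕ) (E : Ultrafilter (TT A B N)) : Prop :=
  Tendsto (root N) (E : Filter (TT A B N)) 𝒮 ∧
    ∃ k, Tendsto (leaves N) (E : Filter (TT A B N)) (tensL (List.replicate k D) : Filter (List B))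

theorem e_step {φ : B → A → Prop} {𝒮 : Filter A} {D : Ultrafilter B}
    (H : ∀ k, ∀ S ∈ 𝒮, ∀ᶠ l in (tensL (List.replicate k D) : Filter (List B)),
      ∃ a ∈ S, ∀ b ∈ l, φ b a) (r N : ℕ) (E : Ultrafilter (TT A B N)) (hE : EGood 𝒮 D N E) :
    ∃ E', EGood 𝒮 D (N + 1) E' ∧ ERel φ 𝒮 r N E E' := by
  obtain ⟨hE1, k, hE2⟩ := hE
  have hfl := tendsto_flatMap hE2 r
  rw [List.flatten_replicate_replicate] at hfl
  have key : ∀ V ∈ tensL (List.replicate r E), ∀ S ∈ 𝒮, ({w : TT A B (N + 1) | Prod.snd w ∈ V ∧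
      root (N + 1) w ∈ S ∧ ∀ b ∈ leaves (N + 1) w, φ b (root (N + 1) w)}).Nonempty := by
    intro V hV S hS
    have h1 := hfl.eventually (H _ S hS)
    obtain ⟨l, hl, a, ha, hb⟩ := (Eventually.and (show ∀ᶠ l in
      (tensL (List.replicate r E) : Filter _), l ∈ V from hV) h1).exists
    exact ⟨(a, l), hl, ha, hb⟩
  obtain ⟨E', hE'⟩ := fipUltra (fun s : Set (TT A B (N + 1)) =>
      ∃ V ∈ tensL (List.replicate r E), ∃ S ∈ 𝒮, {w : TT A B (N + 1) | Prod.snd w ∈ V ∧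
        root (N + 1) w ∈ S ∧ ∀ b ∈ leaves (N + 1) w, φ b (root (N + 1) w)} ⊆ s)
    ⟨Set.univ, univ_mem, Set.univ, univ_mem, Set.subset_univ _⟩
    (by
      rintro s t ⟨V, hV, S, hS, h⟩ ⟨V', hV', S', hS', h'⟩
      exact ⟨V ∩ V', inter_mem hV hV', S ∩ S', inter_mem hS hS', fun w hw =>
        ⟨h ⟨hw.1.1, hw.2.1.1, hw.2.2⟩, h' ⟨hw.1.2, hw.2.1.2, hw.2.2⟩⟩⟩)
    (by
      rintro s ⟨V, hV, S, hS, h⟩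
      exact (key V hV S hS).mono h)
  have hE'' : ∀ V ∈ tensL (List.replicate r E), ∀ S ∈ 𝒮, ∀ᶠ w in (E' : Filter (TT A B (N + 1))),
      Prod.snd w ∈ V ∧ root (N + 1) w ∈ S ∧ ∀ b ∈ leaves (N + 1) w, φ b (root (N + 1) w) := by
    intro V hV S hS
    exact hE' _ ⟨V, hV, S, hS, subset_rfl⟩
  have hsnd : Tendsto (fun w : TT A B (N + 1) => Prod.snd w) E' (tensL (List.replicate r E)) :=
    fun V hV => (hE'' V hV Set.univ univ_mem).mono fun w h => h.1
  refine ⟨E', ⟨fun S hS => (hE'' Set.univ univ_mem S hS).mono fun w h => h.2.1, r * k,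
    hfl.comp hsnd⟩, hsnd, (hE'' Set.univ univ_mem Set.univ univ_mem).mono fun w h => h.2.2⟩

theorem e_seq {φ : B → A → Prop} {𝒮 : Filter A} {D : Ultrafilter B}
    (H : ∀ k, ∀ S ∈ 𝒮, ∀ᶠ l in (tensL (List.replicate k D) : Filter (List B)),
      ∃ a ∈ S, ∀ b ∈ l, φ b a) (r : ℕ) (E0 : Ultrafilter (TT A B 0)) (h0 : EGood 𝒮 D 0 E0) :
    ∃ E : ∀ N, Ultrafilter (TT A B N), E 0 = E0 ∧ (∀ N, EGood 𝒮 D N (E N)) ∧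
      ∀ N, ERel φ 𝒮 r N (E N) (E (N + 1)) := by
  choose f hf1 hf2 using fun N (E : {E : Ultrafilter (TT A B N) // EGood 𝒮 D N E}) =>
    e_step (φ := φ) H r N E.1 E.2
  let E : ∀ N, {E : Ultrafilter (TT A B N) // EGood 𝒮 D N E} := fun N =>
    Nat.rec (motive := fun N => {E : Ultrafilter (TT A B N) // EGood 𝒮 D N E}) ⟨E0, h0⟩
      (fun N E => ⟨f N E, hf1 N E⟩) N
  exact ⟨fun N => (E N).1, rfl, fun N => (E N).2, fun N => hf2 N (E N)⟩

/-- The list of root ultrafilters. -/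
noncomputable def rootUs (E : ∀ N, Ultrafilter (TT A B N)) : ℕ → List (Ultrafilter A)
  | 0 => []
  | N + 1 => (E N).map (root N) :: rootUs E N

theorem rootUs_length (E : ∀ N, Ultrafilter (TT A B N)) : ∀ N, (rootUs E N).length = N
  | 0 => rfl
  | N + 1 => by simp [rootUs, rootUs_length E N]

theorem rootUs_le {𝒮 : Filter A} {D : Ultrafilter B} (E : ∀ N, Ultrafilter (TT A B N))
    (hE : ∀ N, EGood 𝒮 D N (E N)) : ∀ N, ∀ U ∈ rootUs E N, (U : Filter A) ≤ 𝒮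
  | 0 => by simp [rootUs]
  | N + 1 => by
    intro U hU
    rcases List.mem_cons.1 hU with rfl | h
    · exact (hE N).1
    · exact rootUs_le E hE N U h

theorem comb_ev {φ : B → A → Prop} {𝒮 : Filter A} {r : ℕ} (E : ∀ N, Ultrafilter (TT A B N))
    (hR : ∀ N, ERel φ 𝒮 r N (E N) (E (N + 1))) : ∀ (N : ℕ) (Z : List A → Prop),
    (∀ᶠ l in (tensL (rootUs E N) : Filter (List A)), Z l) →
    ∀ᶠ w in (E N : Filter (TT A B N)), ∀ c b, IsArr N w c b → Z (c.map Prod.snd)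
  | 0, Z, hZ => Eventually.of_forall fun w c b hc => by
    cases c with
    | nil => exact ev_tensL_nil.1 hZ
    | cons p t => exact hc.elim
  | N + 1, Z, hZ => by
    have h1 : ∀ᶠ x in (E N : Filter (TT A B N)), ∀ᶠ y in (E N : Filter (TT A B N)),
        ∀ c b, IsArr N y c b → Z (root N x :: c.map Prod.snd) := by
      have hZ' : ∀ᶠ x in (E N : Filter (TT A B N)), ∀ᶠ l in (tensL (rootUs E N) : Filter (List A)),
        Z (root N x :: l) := hZ
      exact hZ'.mono fun x hx => comb_ev E hR N (fun l => Z (root N x :: l)) hx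
    refine ((hR N).1.eventually (ev_tensL_pairwise h1 r)).mono fun w hw c b hc => ?_
    cases c with
    | nil => exact hc.elim
    | cons p t =>
      obtain ⟨x, y, hxy, rfl, ht⟩ := hc
      exact List.pairwise_iff_forall_sublist.1 hw hxy t b ht

theorem tok_ev {φ : B → A → Prop} {𝒮 : Filter A} {D : Ultrafilter B} {r : ℕ}
    (E : ∀ N, Ultrafilter (TT A B N)) (hE : ∀ N, EGood 𝒮 D N (E N))
    (h0 : ∀ᶠ w in (E 0 : Filter (TT A B 0)), ∀ b ∈ leaves 0 w, φ b (root 0 w))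
    (hR : ∀ N, ERel φ 𝒮 r N (E N) (E (N + 1))) (S : Set A) (hS : S ∈ 𝒮) :
    ∀ N, ∀ᶠ w in (E N : Filter (TT A B N)), TOK φ (· ∈ S) r N w
  | 0 => ((hE 0).1.eventually hS).and h0
  | N + 1 => by
    have ih := tok_ev E hE h0 hR S hS N
    have h1 := (hR N).1.eventually (ev_tensL_forall ih r)
    have h2 := (hR N).1.eventually (ev_tensL_length (List.replicate r (E N)))
    filter_upwards [h1, h2, (hR N).2, (hE (N + 1)).1.eventually hS] with w h1 h2 h3 h4
    exact ⟨⟨h4, h3⟩, by simpa using h2, h1⟩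

theorem exists_arr {φ : B → A → Prop} {S : A → Prop} {r : ℕ} {Q : Type z} [Finite Q]
    (hr : Nat.card Q < r) : ∀ (N : ℕ) (w : TT A B N), TOK φ S r N w →
    ∀ col : List (A × A) → A → Q, ∃ c b, IsArr N w c b ∧ b ∈ leaves N w ∧ c.length = N ∧
      (∀ p ∈ c, S p.1 ∧ S p.2 ∧ φ b p.1) ∧
      ∀ h p t, c = h ++ p :: t → col h p.1 = col h p.2
  | 0, w, _, col => ⟨[], Prod.snd w, rfl, by simp [leaves], rfl, by simp, by simp⟩
  | N + 1, w, hw, col => by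
    classical
    have hp : ¬ (Prod.snd w).Pairwise (fun x y => col [] (root N x) ≠ col [] (root N y)) := by
      intro h
      cases nonempty_fintype Q
      have h1 : ((Prod.snd w).map fun x => col [] (root N x)).Nodup := List.pairwise_map.2 h
      have h2 := h1.length_le_card
      rw [List.length_map, hw.2.1, ← Nat.card_eq_fintype_card] at h2
      omega
    rw [List.pairwise_iff_forall_sublist] at hp
    push Not at hp
    obtain ⟨x, y, hxy, hc⟩ := hp
    have hx := hw.2.2 x (hxy.subset (by simp))
    have hy := hw.2.2 y (hxy.subset (by simp))
    obtain ⟨c, b, h1, h2, h3, h4, h5⟩ := exists_arr hr N y hy (fun h => col ((root N y, root N x) :: h))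
    refine ⟨(root N y, root N x) :: c, b, ⟨x, y, hxy, rfl, h1⟩, ?_, by simp [h3], ?_, ?_⟩
    · exact List.mem_flatMap.2 ⟨y, hxy.subset (by simp), h2⟩
    · intro p hp
      rcases List.mem_cons.1 hp with rfl | hp
      · exact ⟨hy.root.1, hx.root.1, hy.root.2 b h2⟩
      · exact h4 p hp
    · intro h p t e
      cases h with
      | nil =>
        simp only [List.nil_append, List.cons.injEq] at e
        rw [← e.1]; exact hc.symm
      | cons p' h =>
        simp only [List.cons_append, List.cons.injEq] at e
        rw [← e.1]
        exact h5 h p t e.2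

theorem comb {φ : B → A → Prop} {𝒮 : Filter A} {D : Ultrafilter B}
    (H : ∀ k, ∀ S ∈ 𝒮, ∀ᶠ l in (tensL (List.replicate k D) : Filter (List B)),
      ∃ a ∈ S, ∀ b ∈ l, φ b a) (E0 : Ultrafilter (A × B)) (h1 : Tendsto Prod.fst (E0 : Filter (A × B)) 𝒮)
    (h2 : Tendsto Prod.snd (E0 : Filter (A × B)) (D : Filter B)) (h3 : ∀ᶠ w in (E0 : Filter (A × B)), φ w.2 w.1)
    {Q : Type z} [Finite Q] (col : List (A × A) → A → Q) (N : ℕ) (S : Set A) (hS : S ∈ 𝒮)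
    (Z : List A → Prop) (hZ : ∀ Ds : List (Ultrafilter A), Ds.length = N →
      (∀ U ∈ Ds, (U : Filter A) ≤ 𝒮) → ∀ᶠ l in (tensL Ds : Filter (List A)), Z l) :
    ∃ (c : List (A × A)) (b : B), c.length = N ∧ (∀ p ∈ c, p.1 ∈ S ∧ p.2 ∈ S ∧ φ b p.1) ∧
      Z (c.map Prod.snd) ∧ ∀ h p t, c = h ++ p :: t → col h p.1 = col h p.2 := by
  obtain ⟨E, hE0, hE, hR⟩ := e_seq H (Nat.card Q + 1) (E0 : Ultrafilter (TT A B 0)) ⟨h1, 1, by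
    intro s hs
    exact h2.eventually (show ∀ᶠ b in (D : Filter B), [b] ∈ s from hs)⟩
  have h0 : ∀ᶠ w in (E 0 : Filter (TT A B 0)), ∀ b ∈ leaves 0 w, φ b (root 0 w) := by
    rw [hE0]
    exact h3.mono fun w hw b hb => by
      have : b = w.2 := by simpa [leaves] using hb
      rw [this]; exact hw
  have e1 := tok_ev E hE h0 hR S hS N
  have e2 := comb_ev E hR N Z (hZ _ (rootUs_length E N) (rootUs_le E hE N))
  obtain ⟨w, hw1, hw2⟩ := (e1.and e2).exists
  obtain ⟨c, b, i1, _, i3, i4, i5⟩ := exists_arr (Nat.lt_succ_self _) N w hw1 col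
  exact ⟨c, b, i3, i4, hw2 c b i1, i5⟩

end Comb


section S3

variable {L : FirstOrder.Language.{u, v}} {𝕄 : Type w} [L.Structure 𝕄]
variable {M : L.ElementarySubstructure 𝕄} {n k : ℕ}

variable (M) in
/-- The trace on `M` of the type of `a0` over `M`. -/
def tpF (a0 : Fin n → 𝕄) : Filter (Fin n → M) where
  sets := {s | ∃ P : (Fin n → 𝕄) → Prop, Dp M P ∧ P a0 ∧ ∀ m, P (up M m) → m ∈ s}
  univ_sets := ⟨_, Dp.true, trivial, fun _ _ => trivial⟩
  sets_of_superset := by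
    rintro s t ⟨P, hP, h1, h2⟩ hst
    exact ⟨P, hP, h1, fun m hm => hst (h2 m hm)⟩
  inter_sets := by
    rintro s t ⟨P, hP, h1, h2⟩ ⟨P', hP', h1', h2'⟩
    exact ⟨_, hP.and hP', ⟨h1, h1'⟩, fun m hm => ⟨h2 m hm.1, h2' m hm.2⟩⟩

theorem mem_tpF {a0 : Fin n → 𝕄} {P : (Fin n → 𝕄) → Prop} (hP : Dp M P) (h : P a0) :
    {m | P (up M m)} ∈ tpF M a0 := ⟨P, hP, h, fun _ hm => hm⟩

/-- Array read off from a list of pairs. -/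
def arrL (dd : Fin n → M) (h : List ((Fin n → M) × (Fin n → M))) : ℕ → Bool → Fin n → 𝕄 :=
  fun i ε => up M (bif ε then (h.getD i (dd, dd)).2 else (h.getD i (dd, dd)).1)

theorem Gn.ev {α : Type} {F : Filter (α → 𝕄)} {x : α → 𝕄} (h : Gn M F (Empty.elim : Empty → 𝕄) x)
    {Q : (α → 𝕄) → Prop} (hQ : Dp M Q) (he : ∀ᶠ v in F, Q v) : Q x :=
  h _ (hQ.re Sum.inr) he

theorem s3 (hL : LimP M) (d : 𝕄) (hd : d ∈ M) {a0 : Fin n → 𝕄} {b0 : Fin k → 𝕄}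
    {Φ : (Fin k → 𝕄) → (Fin n → 𝕄) → Prop} (hΦ : DpΦ M Φ) (h0 : Φ b0 a0) (K : ℕ)
    (hK : ∀ Ds : List (Ultrafilter (Fin n → M)), Ds.length = K →
      (∀ D ∈ Ds, ∀ P : (Fin n → 𝕄) → Prop, Dp M P → P a0 →
        ∀ᶠ x in (D : Filter (Fin n → M)), P (up M x)) →
      ∀ᶠ m in (tensL Ds : Filter (List (Fin n → M))), ¬ ∃ y, ∀ x ∈ m, Φ y (up M x))
    (H : ∀ D : Ultrafilter (Fin k → M), (∀ P : (Fin k → 𝕄) → Prop, Dp M P → P b0 →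
        ∀ᶠ m in (D : Filter (Fin k → M)), P (up M m)) →
      ∀ k', ∀ P : (Fin n → 𝕄) → Prop, Dp M P → P a0 →
        ∀ᶠ l in (tensL (List.replicate k' D) : Filter (List (Fin k → M))),
        ∃ a : Fin n → M, P (up M a) ∧ ∀ b ∈ l, Φ (up M b) (up M a)) (N : ℕ) :
    FF M a0 Φ K 0 N := by
  classical
  let dd : Fin n → M := fun _ => ⟨d, hd⟩
  obtain ⟨E0, hE0⟩ := fipUltra (fun s : Set ((Fin n → M) × (Fin k → M)) =>
    ∃ R : (Fin n ⊕ Fin k → 𝕄) → Prop, Dp M R ∧ R (Sum.elim a0 b0) ∧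
      ∀ w, R (Sum.elim (up M w.1) (up M w.2)) → w ∈ s)
    ⟨_, Dp.true, trivial, fun _ _ => trivial⟩
    (by
      rintro s t ⟨P, hP, h1, h2⟩ ⟨P', hP', h1', h2'⟩
      exact ⟨_, hP.and hP', ⟨h1, h1'⟩, fun m hm => ⟨h2 m hm.1, h2' m hm.2⟩⟩)
    (by
      rintro s ⟨P, hP, h1, h2⟩
      obtain ⟨y, hy⟩ := hP.elem h1
      refine ⟨(y ∘ Sum.inl, y ∘ Sum.inr), h2 _ ?_⟩
      convert hy using 1
      funext i; rcases i with i | i <;> rfl)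
  let D : Ultrafilter (Fin k → M) := E0.map Prod.snd
  have hD : ∀ P : (Fin k → 𝕄) → Prop, Dp M P → P b0 →
        ∀ᶠ m in (D : Filter (Fin k → M)), P (up M m) := fun P hP hb =>
    hE0 _ ⟨_, hP.re Sum.inr, hb, fun w hw => hw⟩
  have h1 : Filter.Tendsto Prod.fst (E0 : Filter ((Fin n → M) × (Fin k → M))) (tpF M a0) := by
    rintro s ⟨P, hP, h1, h2⟩
    exact hE0 _ ⟨_, hP.re Sum.inl, h1, fun w hw => h2 _ hw⟩
  have h3 : ∀ᶠ w in (E0 : Filter ((Fin n → M) × (Fin k → M))), Φ (up M w.2) (up M w.1) :=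
    hE0 _ ⟨_, hΦ.re (Sum.elim Sum.inr Sum.inl), h0, fun w hw => hw⟩
  let good : Finset {P : (Fin n → 𝕄) → Prop // Dp M P ∧ P a0} →
      Finset (Σ i : ℕ, {R : ((Fin i × Bool × Fin n) ⊕ Fin n → 𝕄) → Prop // Dp M R}) →
      Set (ℕ × Bool × Fin n → 𝕄) := fun Δ Δ' => {v |
        (∀ P ∈ Δ, ∀ i < N, ∀ ε, P.1 (uFA v i ε)) ∧
        (∀ R ∈ Δ', R.1 < N → (R.2.1 (Sum.elim (hist (uFA v) R.1) (uFA v R.1 false)) →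
          R.2.1 (Sum.elim (hist (uFA v) R.1) (uFA v R.1 true)))) ∧
        (∀ s : Finset ℕ, (∀ i ∈ s, i < N) → s.card = K →
          ¬ EX Φ (uFA v) (fun i ε => i ∈ s ∧ ε = true)) ∧ EX Φ (uFA v) (p3 0 N)}
  have hgood : ∀ Δ Δ', (good Δ Δ').Nonempty := by
    intro Δ Δ'
    obtain ⟨c, b, c1, c2, c3, c4⟩ := comb (Q := (↥Δ' → Prop)) (φ := fun (b : Fin k → M) (a : Fin n → M) => Φ (up M b) (up M a))
      (𝒮 := tpF M a0) (D := D) (by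
      rintro k' S ⟨P, hP, h1, h2⟩
      exact (H D hD k' P hP h1).mono fun l ⟨a, ha, hb⟩ => ⟨a, h2 a ha, hb⟩) E0 h1 Filter.tendsto_map h3
      (fun h x R => R.1.2.1 (Sum.elim (hist (arrL dd h) R.1.1) (up M x))) N
      {m | ∀ P ∈ Δ, P.1 (up M m)} (mem_tpF (Dp.all Δ fun P _ => P.2.1) (fun P _ => P.2.2))
      (fun l => ∀ l' : List (Fin n → M), l'.Sublist l → l'.length = K → ¬ ∃ y, ∀ x ∈ l', Φ y (up M x))
      (by
        intro Ds hDs hle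
        refine ev_tensL_sublist K _ Ds fun Ds' hs hl => hK Ds' hl ?_
        intro U hU P hP ha
        exact hle U (hs.subset hU) (mem_tpF hP ha))
    have hget : ∀ i, i < N → c.getD i (dd, dd) ∈ c := by
      intro i hi
      rw [List.getD_eq_getElem _ _ (by omega)]
      exact List.getElem_mem _
    refine ⟨FA (arrL dd c), ?_, ?_, ?_, ?_⟩
    · intro P hP i hi ε
      have := c2 _ (hget i hi)
      cases ε
      · exact this.1 P hP
      · exact this.2.1 P hP
    · rintro ⟨i, R⟩ hR hi
      have hi' : i < c.length := by rw [c1]; exact hi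
      have e : c = c.take i ++ (c.getD i (dd, dd)) :: c.drop (i + 1) := by
        rw [List.getD_eq_getElem _ _ hi']; simp
      have := congrFun (c4 _ _ _ e) ⟨⟨i, R⟩, hR⟩
      have e2 : hist (arrL dd (c.take i)) i = hist (uFA (FA (arrL dd c))) i := by
        funext ⟨j, ε, p⟩
        have : (c.take i).getD j (dd, dd) = c.getD j (dd, dd) := by
          rw [List.getD_eq_getElem _ _ (by simp; omega), List.getD_eq_getElem _ _ (by omega)]
          simp
        simp [hist, arrL, uFA, FA, this]
      simp only [e2] at this
      exact fun h => this.mp h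
    · rintro s hs hc ⟨y, hy⟩
      refine c3 (((List.range N).filter (· ∈ s)).map fun i => (c.getD i (dd, dd)).2) ?_
        (by rw [List.length_map, filter_range_length N s hs, hc]) ⟨y, ?_⟩
      · have : c.map Prod.snd = (List.range N).map fun i => (c.getD i (dd, dd)).2 := by
          apply List.ext_getElem
          · simp [c1]
          · intro i h1 h2
            simp at h1
            simp [h1]
        rw [this]
        exact List.filter_sublist.map _
      · intro x hx
        simp only [List.mem_map, List.mem_filter, decide_eq_true_eq] at hx
        obtain ⟨i, hi, rfl⟩ := hx
        exact hy i true ⟨hi.2, rfl⟩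
    · refine ⟨up M b, fun i ε hp => ?_⟩
      rcases hp with ⟨h, _⟩ | ⟨_, h, rfl⟩
      · omega
      · exact (c2 _ (hget i (by omega))).2.2
  obtain ⟨F, hF⟩ := fipUltra (fun s => ∃ Δ Δ', good Δ Δ' ⊆ s) ⟨∅, ∅, Set.subset_univ _⟩
    (by
      rintro s t ⟨Δ, Δ', h⟩ ⟨Γ, Γ', h'⟩
      refine ⟨Δ ∪ Γ, Δ' ∪ Γ', fun v hv => ⟨h ?_, h' ?_⟩⟩
      · exact ⟨fun P hP => hv.1 P (Finset.mem_union_left _ hP),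
          fun P hP => hv.2.1 P (Finset.mem_union_left _ hP), hv.2.2⟩
      · exact ⟨fun P hP => hv.1 P (Finset.mem_union_right _ hP),
          fun P hP => hv.2.1 P (Finset.mem_union_right _ hP), hv.2.2⟩)
    (by
      rintro s ⟨Δ, Δ', h⟩
      exact (hgood Δ Δ').mono h)
  obtain ⟨v, hv⟩ := hL (ℕ × Bool × Fin n) Empty F Empty.elim
  refine ⟨uFA v, ⟨?_, ?_⟩, ?_, ?_⟩
  · intro i hi ε
    refine TE.symm (TE.of fun P hP ha => ?_)
    exact hv.ev (hP.re fun p => (i, ε, p)) (hF _ ⟨{⟨P, hP, ha⟩}, ∅, fun v hv =>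
      hv.1 ⟨P, hP, ha⟩ (by simp) i (by omega) ε⟩)
  · intro i hi
    refine TE.of fun R hR => ?_
    have hh : ∀ ε, Dp M (fun v : ℕ × Bool × Fin n → 𝕄 => R (Sum.elim (hist (uFA v) i) (uFA v i ε))) := by
      intro ε
      refine (hR.re (Sum.elim (fun q : Fin i × Bool × Fin n => ((q.1 : ℕ), q.2)) (fun p => (i, ε, p)))).congr fun v => ?_
      apply iff_of_eq; congr 1
      funext q; rcases q with q | q <;> rfl
    exact hv.ev ((hh false).imp (hh true)) (hF _ ⟨∅, {⟨i, R, hR⟩}, fun v hv =>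
      hv.2.1 ⟨i, R, hR⟩ (by simp) (by simpa using hi)⟩)
  · intro s hs hc
    have hs' : ∀ i ∈ s, i < N := fun i hi => by have := hs i hi; omega
    exact hv.ev (dpEX hΦ (fun i ε => i ∈ s ∧ ε = true) N (fun i ε h => hs' i h.1)).not
      (hF _ ⟨∅, ∅, fun v hv => hv.2.2.1 s hs' hc⟩)
  · exact hv.ev (dpEX hΦ (p3 0 N) N (fun i ε h => by rcases h with h | h <;> omega))
      (hF _ ⟨∅, ∅, fun v hv => hv.2.2.2⟩)

end S3


section HL

variable {L : FirstOrder.Language.{u, v}} {𝕄 : Type w} [L.Structure 𝕄]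
variable {M : L.ElementarySubstructure 𝕄} {n k : ℕ}

theorem ParamFormula.realize_subst {α : Type w'} {γ : Type} (φ : ParamFormula L 𝕄 (α ⊕ γ))
    (c : γ → 𝕄) (xx : α → 𝕄) : (φ.subst c).Realize xx ↔ φ.Realize (Sum.elim xx c) := by
  unfold ParamFormula.subst ParamFormula.Realize
  rw [Formula.realize_relabel]
  apply iff_of_eq; congr 1
  funext i; rcases i with (i | i) | i <;> rfl

variable (M) in
/-- Fill in a tuple from constants in `M` and coordinates of another tuple. -/
def fill {ξ : Type} (f : Fin n → M ⊕ ξ) (A : ξ → 𝕄) : Fin n → 𝕄 :=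
  fun i => Sum.elim (fun i : M => (i : 𝕄)) A (f i)

theorem ofFn_initSeg (σ : ℕ → Bool) {i N : ℕ} (h : i ≤ N) :
    (List.ofFn fun j : Fin i => σ j) <+: (List.ofFn fun j : Fin N => σ j) := by
  have : (List.ofFn fun j : Fin i => σ j) = (List.ofFn fun j : Fin N => σ j).take i := by
    apply List.ext_getElem
    · simp [h]
    · intro j h1 h2
      simp
  rw [this]
  exact ⟨_, List.take_append_drop _ _⟩

theorem sop_co (hL : LimP M) [Nonempty 𝕄] {nv m : ℕ} {P : Set (ParamFormula L 𝕄 (Fin nv))}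
    (hP : ∀ φ ∈ P, φ.ParamsIn (M : Set 𝕄)) (a : Fin m → Fin nv → 𝕄)
    (ha : ∀ j, RealizesPType L 𝕄 P (a j)) (f : Fin n → M ⊕ (Fin m × Fin nv))
    {Φ : (Fin k → 𝕄) → (Fin n → 𝕄) → Prop} (hΦ : DpΦ M Φ)
    (hS : SopTree M (fill M f (flat a)) Φ) : ¬ CoNSOP1 L 𝕄 (M : Set 𝕄) P := by
  obtain ⟨q, T, hT1, hT2, hT3⟩ := hS
  have hW : ∀ η j, ∃ w' : Fin m × Fin nv → 𝕄, TE M (Sum.elim (fill M f (flat a)) (flat a))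
      (Sum.elim (T η j) w') := fun η j => (hT1 η j).symm.ext hL (flat a)
  choose W hW using hW
  have hTW : ∀ η j, T η j = fill M f (W η j) := by
    intro η j
    funext i
    have h1 : Dp M (fun v : Fin n ⊕ (Fin m × Fin nv) → 𝕄 =>
        v (Sum.inl i) = Sum.elim (fun i : M => (i : 𝕄)) (v ∘ Sum.inr) (f i)) := by
      refine ((Dp.eqc (M := M) (α := Bool) true false).sub (fun b => bif b then Sum.inr (Sum.inl i)
        else (f i).map id Sum.inr)).congr fun v => ?_
      cases f i <;> simp
    exact (hW η j _ h1).1 rfl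
  let Q : (Fin k ⊕ (Fin (q * m) × Fin nv) → 𝕄) → Prop := fun v => ∀ j : Fin q,
    Φ (v ∘ Sum.inl) (fill M f fun pr => v (Sum.inr (finProdFinEquiv (j, pr.1), pr.2)))
  have hQ : Dp M Q := by
    refine Dp.allF fun j => ?_
    refine (hΦ.sub (Sum.elim (fun i => Sum.inr (Sum.inl i)) (fun i => (f i).map id
      (fun pr => Sum.inr (finProdFinEquiv (j, pr.1), pr.2))))).congr fun v => ?_
    apply iff_of_eq; congr 1
    funext i
    simp only [Function.comp, fill, Sum.elim_inr]
    cases f i <;> rfl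
  obtain ⟨θ, hθ, e⟩ := (hQ.re (Sum.inr : _ → Empty ⊕ _)).toParam Empty.elim id
  let bb : List Bool → Fin (q * m) → Fin nv → 𝕄 := fun η J p =>
    W η (finProdFinEquiv.symm J).1 ((finProdFinEquiv.symm J).2, p)
  have key : ∀ η xx, (θ.subst (flat (bb η))).Realize xx ↔ ∀ j, Φ xx (T η j) := by
    intro η xx
    rw [ParamFormula.realize_subst, e]
    refine forall_congr' fun j => ?_
    have h1 : (fun pr : Fin m × Fin nv => flat (bb η) (finProdFinEquiv (j, pr.1), pr.2)) =
        W η j := by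
      funext pr
      simp only [flat, bb, Equiv.symm_apply_apply]
    change Φ xx (fill M f (fun pr : Fin m × Fin nv =>
      flat (bb η) (finProdFinEquiv (j, pr.1), pr.2))) ↔ _
    rw [h1, hTW]
  refine not_not.2 ⟨k, q * m, θ, bb, ?_, ?_, ?_, ?_⟩
  · intro i
    rcases hθ i with h | ⟨j, _⟩
    · exact h
    · exact j.elim
  · intro η J θ' hθ'
    have h1 := (hW η (finProdFinEquiv.symm J).1).re (fun p : Fin nv =>
      Sum.inr ((finProdFinEquiv.symm J).2, p))
    exact (h1.tpEq θ' (hP θ' hθ')).1 (ha _ θ' hθ')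
  · intro σ s
    obtain ⟨y, hy⟩ := hT2 (List.ofFn fun j : Fin (s.sup id) => σ j)
    refine ⟨y, fun i hi => ?_⟩
    exact (key _ _).2 (hy _ (ofFn_initSeg σ (Finset.le_sup (f := id) hi)))
  · intro η₁ η₂ h
    rintro ⟨xx, h1, h2⟩
    rw [key] at h1 h2
    exact hT3 η₁ η₂ h ⟨xx, h1, h2⟩

theorem dp_consList {Φ : (Fin k → 𝕄) → (Fin n → 𝕄) → Prop} (hΦ : DpΦ M Φ)
    {P : (Fin n → 𝕄) → Prop} (hP : Dp M P) (d : 𝕄) (N : ℕ) :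
    ∃ R : (ℕ × Fin k → 𝕄) → Prop, Dp M R ∧ ∀ l : List (Fin k → 𝕄), l.length = N →
      (R (fl d l) ↔ ∃ a, P a ∧ ∀ x ∈ l, Φ x a) := by
  refine Dp.ofList N ?_
  have h1 : Dp M (fun v : (Fin N × Fin k) ⊕ Fin n → 𝕄 => P (v ∘ Sum.inr) ∧
      ∀ i : Fin N, Φ (fun j => v (Sum.inl (i, j))) (v ∘ Sum.inr)) :=
    (hP.re Sum.inr).and (Dp.allF fun i => hΦ.re (Sum.elim (fun j => Sum.inl (i, j)) Sum.inr))
  refine h1.exF.congr fun v => ?_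
  refine exists_congr fun a => ?_
  simp only [List.mem_ofFn]
  refine and_congr Iff.rfl ⟨?_, ?_⟩
  · rintro h x ⟨i, rfl⟩
    exact h i
  · intro h i
    exact h _ ⟨i, rfl⟩

/-- The global type along an ultrafilter on tuples of `M`. -/
def GlobalType.ofUltra {j : ℕ} (D : Ultrafilter (Fin k → M)) (gg : Fin j → M ⊕ Fin k) :
    GlobalType L 𝕄 (Fin j) where
  Mem θ := ∀ᶠ m in (D : Filter (Fin k → M)), θ.Realize (fill M gg (up M m))
  consistent S hS := by
    obtain ⟨m, hm⟩ := ((Filter.eventually_all_finset S).2 hS).exists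
    exact ⟨_, hm⟩
  complete θ := by
    rw [or_iff_not_imp_left]
    intro h
    exact (Ultrafilter.eventually_not.2 h).mono fun m hm => by
      simpa [ParamFormula.Realize, ParamFormula.not, Formula.Realize] using hm

theorem GlobalType.ofUltra_inv {j : ℕ} (D : Ultrafilter (Fin k → M)) (gg : Fin j → M ⊕ Fin k) :
    (GlobalType.ofUltra D gg).InvariantOver (M : Set 𝕄) := by
  intro P ψ b b' h
  have h := TE.ofTpEq h
  refine Filter.eventually_congr (Filter.Eventually.of_forall fun m => ?_)
  have h1 : Dp M (fun v : P → 𝕄 => ψ.Realize (Sum.elim (fill M gg (up M m)) v)) := by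
    refine ⟨ψ.relabel (Sum.elim (fun i => Sum.inl (Sum.elim id m (gg i))) Sum.inr), fun v => ?_⟩
    change ψ.Realize _ ↔ _
    rw [Formula.realize_relabel]
    apply iff_of_eq; congr 1
    funext i; rcases i with i | i
    · simp only [Function.comp, Sum.elim_inl, fill]
      cases gg i <;> rfl
    · rfl
  exact h _ h1

theorem hlem (hL : LimP M) (d : 𝕄) (hd : d ∈ M) {δ : Type w} {ξ : Type} (b : δ → 𝕄)
    (A : ξ → 𝕄) (h : IndKd L 𝕄 (M : Set 𝕄) (Set.range b) A) (g : Fin k → δ) (f : Fin n → M ⊕ ξ)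
    {Φ : (Fin k → 𝕄) → (Fin n → 𝕄) → Prop} (hΦ : DpΦ M Φ) (h0 : Φ (b ∘ g) (fill M f A))
    (D : Ultrafilter (Fin k → M)) (hD : ∀ P : (Fin k → 𝕄) → Prop, Dp M P → P (b ∘ g) →
        ∀ᶠ m in (D : Filter (Fin k → M)), P (up M m)) (k' : ℕ) (P : (Fin n → 𝕄) → Prop)
    (hP : Dp M P) (hPa : P (fill M f A)) :
    ∀ᶠ l in (tensL (List.replicate k' D) : Filter (List (Fin k → M))),
        ∃ a : Fin n → M, P (up M a) ∧ ∀ b ∈ l, Φ (up M b) (up M a) := by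
  classical
  let R : (Fin k ⊕ ξ → 𝕄) → Prop := fun v => Φ (v ∘ Sum.inl) (fill M f (v ∘ Sum.inr)) ∧
    P (fill M f (v ∘ Sum.inr))
  have hfill : ∀ (v : Fin k ⊕ ξ → 𝕄) i, Sum.elim (fun i : M => (i : 𝕄)) v ((f i).map id Sum.inr) =
      fill M f (v ∘ Sum.inr) i := by
    intro v i
    simp only [fill]
    cases f i <;> rfl
  have hR : Dp M R := by
    refine Dp.and ?_ ?_
    · refine (hΦ.sub (Sum.elim (fun i => Sum.inr (Sum.inl i)) (fun i => (f i).map id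
        Sum.inr))).congr fun v => ?_
      apply iff_of_eq; congr 1
      funext i
      exact hfill v i
    · refine (hP.sub (fun i => (f i).map id Sum.inr)).congr fun v => ?_
      apply iff_of_eq; congr 1
      funext i
      exact hfill v i
  obtain ⟨j, ψ, gg, hψ⟩ := hR.toParam' (id : ξ → ξ)
  have hnk := h ⟨Fin j, ψ, fill M gg (b ∘ g)⟩ (by
    intro i
    change Sum.elim _ _ (gg i) ∈ _
    rcases gg i with i | i
    · left; simp
    · right; simp) ((hψ (b ∘ g) A).2 ⟨h0, hPa⟩)
  -- the Morley sequence
  have hb0 : Gn M ((D.map (up M) : Ultrafilter (Fin k → 𝕄)) : Filter (Fin k → 𝕄)) 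
      (fl d ([] : List (Fin k → 𝕄))) (b ∘ g) := by
    have h1 : Gn M ((D.map (up M) : Ultrafilter (Fin k → 𝕄)) : Filter (Fin k → 𝕄))
        (Empty.elim : Empty → 𝕄) (b ∘ g) := by
      intro R hR he
      by_contra hn
      have h2 : Dp M (fun v : Fin k → 𝕄 => R (Sum.elim Empty.elim v)) := by
        refine (hR.sub (Sum.elim Empty.elim Sum.inr)).congr fun v => ?_
        apply iff_of_eq; congr 1
        funext i; rcases i with i | i
        · exact i.elim
        · rfl
      have h3 := hD _ h2.not hn
      have he' : ∀ᶠ m in (D : Filter (Fin k → M)), R (Sum.elim Empty.elim (up M m)) := he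
      obtain ⟨m, hm1, hm2⟩ := (h3.and he').exists
      exact hm1 hm2
    exact h1.rez (fun _ => Sum.inl ⟨d, hd⟩)
  have hnx : ∀ l : List (Fin k → 𝕄), ∃ x, Gn M ((D.map (up M) : Ultrafilter (Fin k → 𝕄)) :
      Filter (Fin k → 𝕄)) (fl d l) x ∧ (l = [] → x = b ∘ g) := by
    intro l
    by_cases hl : l = []
    · subst hl
      exact ⟨_, hb0, fun _ => rfl⟩
    · obtain ⟨x, hx⟩ := hL (Fin k) (ℕ × Fin k) ((D.map (up M) : Ultrafilter (Fin k → 𝕄)) :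
        Filter (Fin k → 𝕄)) (fl d l)
      exact ⟨x, hx, fun h => absurd h hl⟩
  choose nx hnx1 hnx2 using hnx
  let lst : ℕ → List (Fin k → 𝕄) := fun i =>
    Nat.rec (motive := fun _ => List (Fin k → 𝕄)) [] (fun _ l => nx l :: l) i
  let zz : ℕ → Fin k → 𝕄 := fun i => nx (lst i)
  have hlst : ∀ i, lst (i + 1) = zz i :: lst i := fun i => rfl
  have hz0 : zz 0 = b ∘ g := hnx2 [] rfl
  have hmem : ∀ i x, x ∈ lst i ↔ ∃ j < i, x = zz j := by
    intro i
    induction i with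
    | zero => intro x; simp [lst]
    | succ i ih =>
      intro x
      rw [hlst, List.mem_cons, ih]
      simp only [Nat.lt_succ_iff_lt_or_eq]
      grind
  have hgn : ∀ i, GnL M d ((List.replicate i D).map (·.map (up M))) (lst i) := by
    intro i
    induction i with
    | zero => trivial
    | succ i ih => exact ⟨hnx1 _, ih⟩
  have hcons : FamConsistent fun (i : ℕ) (xx : ξ → 𝕄) =>
      ψ.Realize (Sum.elim xx (fill M gg (zz i))) := by
    by_contra hc
    refine hnk ⟨fun i => fill M gg (zz i), by simp only [hz0], ⟨GlobalType.ofUltra D gg,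
      GlobalType.ofUltra_inv D gg, ?_⟩, hc⟩
    intro i θ hθ hpar
    have hpar' : θ.ParamsIn ((M : Set 𝕄) ∪ Set.range (fl d (lst i))) := by
      intro t
      rcases hpar t with h1 | h1
      · exact Or.inl h1
      · simp only [Set.mem_iUnion] at h1
        obtain ⟨i', hi', s, hs⟩ := h1
        rw [← hs]
        simp only [fill]
        rcases gg s with c | s
        · left; simp
        · right
          obtain ⟨r, hr, e⟩ := List.mem_iff_getElem.1 ((hmem i (zz i')).2 ⟨i', hi', rfl⟩)
          refine ⟨(r, s), ?_⟩
          simp [fl, hr, e]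
    obtain ⟨R', hR', e⟩ := Dp.ofParam θ _ hpar'
    rw [e]
    have hkey : ∀ x : Fin k → 𝕄, (fun q => Sum.elim (fun i : M => (i : 𝕄)) (Sum.elim (fl d (lst i)) x)
        ((Sum.elim (fun q => Sum.inr (Sum.inl q)) (fun t => (gg t).map id Sum.inr) :
          (ℕ × Fin k) ⊕ Fin j → M ⊕ ((ℕ × Fin k) ⊕ Fin k)) q)) =
        Sum.elim (fl d (lst i)) (fill M gg x) := by
      intro x
      funext q
      rcases q with q | q
      · rfl
      · simp only [Sum.elim_inr, fill]
        cases gg q <;> rfl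
    have h2 := hnx1 (lst i) _ (hR'.sub (Sum.elim (fun q => Sum.inr (Sum.inl q))
      (fun t => (gg t).map id Sum.inr))) (by
        have hθ' : ∀ᶠ m in (D : Filter (Fin k → M)), θ.Realize (fill M gg (up M m)) := hθ
        refine hθ'.mono fun m hm => ?_
        rw [e] at hm
        rw [← hkey] at hm
        exact hm)
    rw [← hkey]
    exact h2
  obtain ⟨xx, hxx⟩ := hcons (Finset.range (k' + 1))
  have hex : ∃ a, P a ∧ ∀ x ∈ lst k', Φ x a := by
    refine ⟨fill M f xx, ((hψ (zz 0) xx).1 (hxx 0 (by simp))).2, fun x hx => ?_⟩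
    obtain ⟨i, hi, rfl⟩ := (hmem _ _).1 hx
    exact ((hψ (zz i) xx).1 (hxx i (by simp; omega))).1
  obtain ⟨R2, hR2, e2⟩ := dp_consList hΦ hP d k'
  have h3 := ((hgn k').tens hR2).1 ((e2 _ (by simpa using (hgn k').length)).2 hex)
  filter_upwards [h3, ev_tensL_length (List.replicate k' D)] with l h4 h5
  obtain ⟨a, ha1, ha2⟩ := (e2 _ (by simpa using h5)).1 h4
  have h6 : Dp M (fun a : Fin n → 𝕄 => P a ∧ ∀ x ∈ l.toFinset, Φ (up M x) a) := by
    refine hP.and (Dp.all _ fun x _ => ?_)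
    refine (hΦ.sub (Sum.elim (fun i => Sum.inl (x i)) Sum.inr)).congr fun v => ?_
    exact Iff.rfl
  obtain ⟨y, hy1, hy2⟩ := h6.elem (x := a) ⟨ha1, fun x hx => ha2 _ (by
    simp only [List.mem_map]; exact ⟨x, by simpa using hx, rfl⟩)⟩
  exact ⟨y, hy1, fun x hx => hy2 x (by simpa using hx)⟩

end HL


section Final

variable {L : FirstOrder.Language.{u, v}} {𝕄 : Type w} [L.Structure 𝕄]
variable {M : L.ElementarySubstructure 𝕄}

/-- If `M` is not all of `𝕄`, then `M` is infinite. -/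
theorem aleph0_le_of_not_mem {e : 𝕄} (he : e ∉ M) :
    Cardinal.aleph0 ≤ Cardinal.mk ↥(M : Set 𝕄) := by
  by_contra hlt
  have hfin : Finite ↥(M : Set 𝕄) := Cardinal.lt_aleph0_iff_finite.1 (not_le.1 hlt)
  have hfin' : Finite M := hfin
  have h1 : Dp M (fun v : Unit → 𝕄 => ∀ c : M, ¬ v () = c) := by
    refine Dp.allF fun c => Dp.not ?_
    exact ((Dp.eqc (M := M) (α := Bool) true false).sub (fun b => bif b then Sum.inr ()
      else Sum.inl c)).congr fun v => Iff.rfl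
  obtain ⟨y, hy⟩ := h1.elem (x := fun _ => e) (fun c hc => he (by rw [show e = (c : 𝕄) from hc]; exact c.2))
  exact hy (y ()) rfl

theorem symm_main (κ : Cardinal.{w}) [IsMonster L 𝕄 κ]
    (hMsmall : Cardinal.mk ↥(M : Set 𝕄) < κ) {nv : ℕ}
    (P : Set (ParamFormula L 𝕄 (Fin nv)))
    (hP : ∀ φ ∈ P, φ.ParamsIn (M : Set 𝕄)) (hco : CoNSOP1 L 𝕄 (M : Set 𝕄) P)
    {m : ℕ} (a : Fin m → Fin nv → 𝕄) (ha : ∀ j, RealizesPType L 𝕄 P (a j))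
    {δ : Type w} (b : δ → 𝕄)
    (h : IndKd L 𝕄 (M : Set 𝕄) (Set.range b) (flat a)) :
    IndKd L 𝕄 (M : Set 𝕄) (Set.range (flat a)) b := by
  rintro φ hφ hr ⟨bb, hbb0, ⟨q, hq, hmor⟩, hinc⟩
  obtain ⟨Uq, hUq⟩ := q.ultra
  have hgn : ∀ i, Gn M (Uq : Filter (φ.Params → 𝕄)) (Empty.elim : Empty → 𝕄) (bb i) := by
    intro i
    refine q.ultra_gn Uq hUq (hmor i) _ ?_
    rintro c (hc | ⟨j, _⟩)
    · exact Or.inl hc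
    · exact j.elim
  have hgn' : ∀ i (R : (φ.Params → 𝕄) → Prop), Dp M R →
      (∀ᶠ x in (Uq : Filter (φ.Params → 𝕄)), R x) → R (bb i) :=
    fun i R hR he => hgn i (fun v => R (v ∘ Sum.inr)) (hR.re Sum.inr) he
  have hev : ∀ (R : (φ.Params → 𝕄) → Prop), Dp M R → R (bb 0) →
      ∀ᶠ x in (Uq : Filter (φ.Params → 𝕄)), R x := by
    intro R hR h0
    by_contra hn
    exact hgn' 0 _ hR.not (Ultrafilter.eventually_not.2 hn) h0
  by_cases hall : ∀ e : 𝕄, e ∈ M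
  · have hbi : ∀ i, bb i = bb 0 := by
      intro i
      funext p
      have h1 : Dp M (fun v : φ.Params → 𝕄 => v p = bb 0 p) :=
        ((Dp.eqc (M := M) (α := Bool) true false).sub (fun t => bif t then Sum.inr p
          else Sum.inl ⟨bb 0 p, hall _⟩)).congr fun v => Iff.rfl
      exact hgn' i _ h1 (hev _ h1 rfl)
    refine hinc fun s => ⟨b, fun i _ => ?_⟩
    simp only [hbi i, hbb0]
    exact hr
  push Not at hall
  obtain ⟨e, he⟩ := hall
  haveI : Nonempty 𝕄 := ⟨e⟩
  have hinf := aleph0_le_of_not_mem he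
  have hL : LimP M := limP M κ hMsmall hinf
  obtain ⟨d, hd⟩ : ∃ d : 𝕄, d ∈ M := by
    haveI := Cardinal.infinite_iff.2 hinf
    obtain ⟨d⟩ := (inferInstance : Nonempty ↥(M : Set 𝕄))
    exact ⟨d, d.2⟩
  -- reduction to finitely many variables
  obtain ⟨k, ψ1, g, hg, e1⟩ := param_split (𝕄 := 𝕄) φ.toFormula
  obtain ⟨n, ψ, g', hg', e2⟩ := param_split (𝕄 := 𝕄) ψ1
  let Φ : (Fin k → 𝕄) → (Fin n → 𝕄) → Prop := fun y x => ψ.Realize (Sum.elim y x)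
  have hφΦ : ∀ c v, φ.toFormula.Realize (Sum.elim c v) ↔ Φ (c ∘ g) (v ∘ g') := fun c v =>
    (e1 c v).trans (e2 v (c ∘ g))
  have hΦ : DpΦ M Φ := by
    refine ⟨ψ.relabel Sum.inr, fun v => ?_⟩
    rw [Formula.realize_relabel]
    apply iff_of_eq
    change ψ.Realize _ = _
    congr 1
    funext i; rcases i with i | i <;> rfl
  have hf : ∀ p : Fin n, ∃ t : M ⊕ (Fin m × Fin nv),
      Sum.elim (fun i : M => (i : 𝕄)) (flat a) t = φ.params (g' p) := by
    intro p
    rcases hφ (g' p) with h1 | ⟨t, h1⟩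
    · exact ⟨Sum.inl ⟨_, h1⟩, rfl⟩
    · exact ⟨Sum.inr t, h1⟩
  choose f hf using hf
  have ha0 : fill M f (flat a) = φ.params ∘ g' := funext hf
  have h0 : Φ (b ∘ g) (fill M f (flat a)) := by
    rw [ha0]
    exact (hφΦ _ _).1 hr
  let U : Ultrafilter (Fin n → 𝕄) := Uq.map (· ∘ g')
  have hU : Inv M (U : Filter (Fin n → 𝕄)) := (q.ultra_inv hq Uq hUq).re g'
  have hUa : ∀ P : (Fin n → 𝕄) → Prop, Dp M P → P (fill M f (flat a)) →
      ∀ᶠ x in (U : Filter (Fin n → 𝕄)), P x := by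
    intro R hR h1
    have := hev _ (hR.re g') (by rw [hbb0]; rw [ha0] at h1; exact h1)
    exact this
  unfold FamConsistent at hinc
  push Not at hinc
  obtain ⟨s, hs⟩ := hinc
  have hK : ∀ l, GnL M d (List.replicate (s.sup id + 1) U) l → ¬ ∃ y, ∀ x ∈ l, Φ y x := by
    intro l hl hy
    obtain ⟨y, hy⟩ := (gnL_inc hΦ (fun V hV => by rw [List.eq_of_mem_replicate hV]; exact hU) hl
      (mor_gnL q Uq hUq bb hmor g' d hd (s.sup id + 1))).1 hy
    obtain ⟨i, hi, hn⟩ := hs (Function.extend g y b)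
    refine hn ((hφΦ _ _).2 ?_)
    rw [Function.extend_comp hg]
    exact hy _ ((mor_mem _ _ _ _).2 ⟨i, Nat.lt_succ_of_le (Finset.le_sup (f := id) hi), rfl⟩)
  have hns : ¬ SopTree M (fill M f (flat a)) Φ := fun hS => sop_co hL hP a ha f hΦ hS hco
  obtain ⟨K', hK'⟩ := s4 hL d hd hΦ hns U hU hUa _ hK
  exact hns (s5 hL hΦ K' (s3 hL d hd hΦ h0 K' hK' fun D hD k' R hR hRa =>
    hlem hL d hd b (flat a) h g f hΦ h0 D hD k' R hR hRa))

end Final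


/-- symmetry of Kim-dividing independence for tuples of realizations of
a co-NSOP₁ type. -/
theorem statement_5
    (L : FirstOrder.Language.{u, v}) (𝕄 : Type w) [L.Structure 𝕄]
    (κ : Cardinal.{w}) [IsMonster L 𝕄 κ]
    (M : L.ElementarySubstructure 𝕄) (hMsmall : Cardinal.mk ↥(M : Set 𝕄) < κ)
    {nv : ℕ} (P : Set (ParamFormula L 𝕄 (Fin nv)))
    (hP : ∀ φ ∈ P, φ.ParamsIn (M : Set 𝕄))
    (hco : CoNSOP1 L 𝕄 (M : Set 𝕄) P)
    {m : ℕ} (a : Fin m → Fin nv → 𝕄) (ha : ∀ j, RealizesPType L 𝕄 P (a j))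
    {δ : Type w} (b : δ → 𝕄)
    (h : IndKd L 𝕄 (M : Set 𝕄) (Set.range b) (flat a)) :
    IndKd L 𝕄 (M : Set 𝕄) (Set.range (flat a)) b := by
  exact symm_main κ hMsmall P hP hco a ha b h

end NSOP3Paper
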